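/- The parallel translation operator T = C − O : H → H is a compact self-adjoint operator with trivial kernel, whose eigenvalues are exactly λ_n = (−1)^{n−1}/(n(n+1)) for n = 1, 2, 3, …, the eigenspace of T for λ_n having dimension 2(2n+1). The orthographic operator O : H → H is a compact self-adjoint operator whose set of nonzero eigenvalues is exactly { −λ_n = (−1)^n/(n(n+1)) : n = 1, 2, 3, … }, the eigenspace of O for −λ_n having dimension 2n+1. -/

import Mathlib

noncomputable section

open MeasureTheory Submodule
open scoped RealInnerProductSpace

abbrev V : Type := EuclideanSpace ℝ (Fin 3)

abbrev S2 : Type := Metric.sphere (0 : V) 1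

/-- The plane `x^⊥` orthogonal to a point `x` of the unit sphere. -/
def plane (x : S2) : Submodule ℝ V := (ℝ ∙ (x : V))ᗮ

/-- The common line `x^⊥ ∩ y^⊥`. -/
def cline (x y : S2) : Submodule ℝ V := plane x ⊓ plane y

/-- The common-lines kernel `C(x,y) : V → V`: orthogonal projection onto the line
`x^⊥ ∩ y^⊥`.  Its restriction to `y^⊥` is the kernel of the paper: it sends `v ∈ y^⊥` to
the orthogonal projection of `v` onto `x^⊥ ∩ y^⊥`, viewed inside `x^⊥`. -/
def Cker (x y : S2) : V →ₗ[ℝ] V :=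
  (cline x y).subtype ∘ₗ (orthogonalProjection (cline x y)).toLinearMap

/-- The map on the sphere induced by a linear isometry of `V`. -/
def sphereMap (g : V ≃ₗᵢ[ℝ] V) (x : S2) : S2 :=
  ⟨g x, by
    have := mem_sphere_zero_iff_norm.mp x.2
    simp [mem_sphere_zero_iff_norm, this]⟩

/-- The antipodal map on the sphere. -/
def negS (x : S2) : S2 :=
  ⟨-(x : V), by
    have := mem_sphere_zero_iff_norm.mp x.2
    simp [mem_sphere_zero_iff_norm, this]⟩

/-- The orthogonal projection `Pr_{x^⊥} : V → x^⊥`, viewed with values in `V`. -/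
def projPerp (x : S2) (v : V) : V := (orthogonalProjection (plane x) v : V)

/-- The unit vector `o_{x,y} = Pr_{x^⊥}(y)/‖Pr_{x^⊥}(y)‖ ∈ x^⊥`. -/
def oVec (x y : S2) : V := ‖projPerp x (y : V)‖⁻¹ • projPerp x (y : V)

/-- The orthographic kernel `O(x,y) : V → V`, `v ↦ B(o_{y,x}, v)·o_{x,y}`.  Its restriction
to `y^⊥` is the kernel of the paper, with values in `x^⊥`. -/
def Oker (x y : S2) : V →ₗ[ℝ] V where
  toFun v := ⟪oVec y x, v⟫ • oVec x y
  map_add' a b := by simp only [inner_add_right, add_smul]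
  map_smul' c a := by simp only [inner_smul_right, RingHom.id_apply, smul_smul]

/-- The Hilbert space `H` of square integrable sections of the bundle of planes, realized as
the subspace of `L²` maps `s : S² → V` with `s x ∈ x^⊥` almost everywhere; it carries the
inner product `(s₁, s₂) = ∫ ⟪s₁ x, s₂ x⟫ dx` inherited from `L²`. -/
def Hsub (μ : Measure S2) : Submodule ℝ (Lp V 2 μ) where
  carrier := {f | ∀ᵐ x ∂μ, f x ∈ plane x}
  add_mem' := by
    intro f g hf hg
    filter_upwards [hf, hg, Lp.coeFn_add f g] with x h1 h2 h3
    simp only [Pi.add_apply] at h3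
    rw [h3]; exact add_mem h1 h2
  zero_mem' := by
    filter_upwards [Lp.coeFn_zero V 2 μ] with x h
    simp only [Pi.zero_apply] at h
    rw [h]; exact zero_mem _
  smul_mem' := by
    intro c f hf
    filter_upwards [hf, Lp.coeFn_smul c f] with x h1 h2
    simp only [Pi.smul_apply] at h2
    rw [h2]; exact smul_mem _ _ h1

/-- The parallel translation kernel `T(x,y) = C(x,y) - O(x,y)`. -/
def Tker (x y : S2) : V →ₗ[ℝ] V := Cker x y - Oker x y


open scoped RealInnerProductSpace

lemma mem_plane {x : S2} {v : V} : v ∈ plane x ↔ ⟪(x:V), v⟫ = 0 := by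
  unfold plane
  rw [Submodule.mem_orthogonal_singleton_iff_inner_right]

lemma S2_norm (x : S2) : ‖(x:V)‖ = 1 := mem_sphere_zero_iff_norm.mp x.2

lemma S2_inner (x : S2) : ⟪(x:V), (x:V)⟫ = 1 := by
  rw [real_inner_self_eq_norm_sq, S2_norm]; norm_num

lemma S2_abs_le (x y : S2) : |⟪(x:V), (y:V)⟫| ≤ 1 := by
  have := abs_real_inner_le_norm (x:V) (y:V)
  simpa [S2_norm] using this

lemma S2_sq_le (x y : S2) : 0 ≤ 1 - ⟪(x:V), (y:V)⟫^2 := by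
  have := S2_abs_le x y
  have := sq_le_one_iff_abs_le_one (⟪(x:V), (y:V)⟫) |>.2 this
  linarith

lemma projPerp_eq (x : S2) (v : V) : projPerp x v = v - ⟪(x:V), v⟫ • (x:V) := by
  unfold projPerp
  have : (plane x).starProjection v = v - ⟪(x:V), v⟫ • (x:V) := by
    apply Submodule.eq_starProjection_of_mem_of_inner_eq_zero
    · rw [mem_plane, inner_sub_right, inner_smul_right, S2_inner]; ring
    · intro w hw
      rw [mem_plane] at hw
      simp [inner_smul_left, hw]
  exact this

lemma Cker_eq (x y : S2) (v : V) (hv : v ∈ plane y) (ht : 1 - ⟪(x:V),(y:V)⟫^2 ≠ 0) :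
    Cker x y v = v - (⟪(x:V), v⟫ / (1 - ⟪(x:V),(y:V)⟫^2)) • ((x:V) - ⟪(x:V),(y:V)⟫ • (y:V)) := by
  have : (cline x y).starProjection v = v - (⟪(x:V), v⟫ / (1 - ⟪(x:V),(y:V)⟫^2)) • ((x:V) - ⟪(x:V),(y:V)⟫ • (y:V)) := by
    rw [mem_plane] at hv
    apply Submodule.eq_starProjection_of_mem_of_inner_eq_zero
    · refine ⟨?_, ?_⟩
      · show _ ∈ plane x
        rw [mem_plane]
        simp only [inner_sub_right, inner_smul_right, S2_inner]
        field_simp; ring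
      · show _ ∈ plane y
        rw [mem_plane]
        simp only [inner_sub_right, inner_smul_right, S2_inner, hv, real_inner_comm (x:V) (y:V)]
        ring
    · intro w hw
      have h1 := mem_plane.1 hw.1
      have h2 := mem_plane.1 hw.2
      simp [inner_smul_left, inner_sub_left, h1, h2]
  exact this

lemma norm_projPerp_sq (x y : S2) : ‖projPerp x (y:V)‖ ^ 2 = 1 - ⟪(x:V),(y:V)⟫^2 := by
  rw [← real_inner_self_eq_norm_sq, projPerp_eq]
  simp only [inner_sub_right, inner_sub_left, inner_smul_left, inner_smul_right, S2_inner, real_inner_comm (x:V) (y:V)]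
  simp; ring

lemma Oker_eq (x y : S2) (v : V) (hv : v ∈ plane y) :
    Oker x y v = (⟪(x:V), v⟫ / (1 - ⟪(x:V),(y:V)⟫^2)) • ((y:V) - ⟪(x:V),(y:V)⟫ • (x:V)) := by
  show ⟪oVec y x, v⟫ • oVec x y = _
  rw [mem_plane] at hv
  have h1 := norm_projPerp_sq x y
  have h2 := norm_projPerp_sq y x
  rw [real_inner_comm] at h2
  have h3 : ‖projPerp x (y:V)‖ = ‖projPerp y (x:V)‖ := by
    rw [← sq_eq_sq₀ (norm_nonneg _) (norm_nonneg _), h1, h2]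
  unfold oVec
  rw [← h1, h3, inner_smul_left, smul_smul, projPerp_eq x, projPerp_eq y]
  simp only [inner_sub_left, inner_smul_left, hv]
  congr 1
  simp
  ring

lemma Tker_eq (x y : S2) (v : V) (hv : v ∈ plane y) (ht : 1 - ⟪(x:V),(y:V)⟫^2 ≠ 0) :
    Tker x y v = v - (⟪(x:V), v⟫ / (1 + ⟪(x:V),(y:V)⟫)) • ((x:V) + (y:V)) := by
  show Cker x y v - Oker x y v = _
  rw [Cker_eq x y v hv ht, Oker_eq x y v hv]
  set t := ⟪(x:V),(y:V)⟫
  have h1 : 1 + t ≠ 0 := fun h => ht (by linear_combination (1-t) * h)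
  have h2 : 1 - t ≠ 0 := fun h => ht (by linear_combination (1+t) * h)
  have : ⟪(x:V), v⟫ / (1 + t) = (1-t) * (⟪(x:V), v⟫ / (1 - t^2)) := by
    field_simp; ring
  rw [this]
  module

open scoped RealInnerProductSpace

/-- Invariance of a measure on the sphere. -/
def InvM (μ : Measure S2) : Prop := ∀ g : V ≃ₗᵢ[ℝ] V, MeasurePreserving (sphereMap g) μ μ

lemma continuous_sphereMap (g : V ≃ₗᵢ[ℝ] V) : Continuous (sphereMap g) := by
  unfold sphereMap
  exact Continuous.subtype_mk (g.continuous.comp continuous_subtype_val) _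

/-- `sphereMap` as a homeomorphism. -/
def sphereHomeo (g : V ≃ₗᵢ[ℝ] V) : S2 ≃ₜ S2 where
  toFun := sphereMap g
  invFun := sphereMap g.symm
  left_inv x := by ext1; simp [sphereMap]
  right_inv x := by ext1; simp [sphereMap]
  continuous_toFun := continuous_sphereMap g
  continuous_invFun := continuous_sphereMap g.symm

lemma integral_sphereMap {E : Type*} [NormedAddCommGroup E] [NormedSpace ℝ E] {μ : Measure S2} (hμ : InvM μ)
    (g : V ≃ₗᵢ[ℝ] V) (G : S2 → E) : ∫ y, G (sphereMap g y) ∂μ = ∫ y, G y ∂μ :=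
  (hμ g).integral_comp (sphereHomeo g).measurableEmbedding G

lemma exists_frame (u v w : V) (huu : ⟪u,u⟫ = 1) (hvv : ⟪v,v⟫ = 1) (hww : ⟪w,w⟫ = 1)
    (huv : ⟪u,v⟫ = 0) (huw : ⟪u,w⟫ = 0) (hvw : ⟪v,w⟫ = 0) :
    ∃ B : OrthonormalBasis (Fin 3) ℝ V, B 0 = u ∧ B 1 = v ∧ B 2 = w := by
  have ho : Orthonormal ℝ ![u,v,w] := by
    have n1 : ∀ z : V, ⟪z,z⟫ = 1 → ‖z‖ = 1 := by
      intro z hz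
      rw [real_inner_self_eq_norm_sq] at hz
      exact (pow_eq_one_iff_of_nonneg (norm_nonneg z) two_ne_zero).1 hz
    rw [orthonormal_vecCons_iff, orthonormal_vecCons_iff, orthonormal_vecCons_iff]
    refine ⟨n1 u huu, ?_, n1 v hvv, ?_, n1 w hww, ?_, ?_⟩
    · intro i; fin_cases i
      · exact huv
      · exact huw
    · intro i; fin_cases i
      exact hvw
    · intro i; exact i.elim0
    · exact ⟨fun i => i.elim0, fun i => i.elim0⟩
  let f : Fin 3 → V := ![u,v,w]
  have ho2 : Orthonormal ℝ ((Set.univ : Set (Fin 3)).restrict f) :=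
    ho.comp (Subtype.val : ↥(Set.univ : Set (Fin 3)) → Fin 3) Subtype.val_injective
  obtain ⟨B, hB⟩ := ho2.exists_orthonormalBasis_extension_of_card_eq (by simp)
  exact ⟨B, hB 0 trivial, hB 1 trivial, hB 2 trivial⟩

lemma integral_frame {E : Type*} [NormedAddCommGroup E] [NormedSpace ℝ E] {μ : Measure S2} (hμ : InvM μ)
    (B : OrthonormalBasis (Fin 3) ℝ V) (G : ℝ → ℝ → ℝ → E) :
    ∫ y : S2, G ⟪B 0, (y:V)⟫ ⟪B 1, (y:V)⟫ ⟪B 2, (y:V)⟫ ∂μ = ∫ y : S2, G ((y:V) 0) ((y:V) 1) ((y:V) 2) ∂μ := by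
  rw [← integral_sphereMap hμ B.repr (fun y : S2 => G ((y:V) 0) ((y:V) 1) ((y:V) 2))]
  simp [sphereMap, OrthonormalBasis.repr_apply_apply]

lemma integral_frame' {E : Type*} [NormedAddCommGroup E] [NormedSpace ℝ E] {μ : Measure S2} (hμ : InvM μ)
    (u v w : V) (huu : ⟪u,u⟫ = 1) (hvv : ⟪v,v⟫ = 1) (hww : ⟪w,w⟫ = 1)
    (huv : ⟪u,v⟫ = 0) (huw : ⟪u,w⟫ = 0) (hvw : ⟪v,w⟫ = 0) (G : ℝ → ℝ → ℝ → E) :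
    ∫ y : S2, G ⟪u, (y:V)⟫ ⟪v, (y:V)⟫ ⟪w, (y:V)⟫ ∂μ = ∫ y : S2, G ((y:V) 0) ((y:V) 1) ((y:V) 2) ∂μ := by
  obtain ⟨B, rfl, rfl, rfl⟩ := exists_frame u v w huu hvv hww huv huw hvw
  exact integral_frame hμ B G

lemma V_inner (a b : V) : ⟪a, b⟫ = a 0 * b 0 + a 1 * b 1 + a 2 * b 2 := by
  simp [PiLp.inner_apply, Fin.sum_univ_three, mul_comm]

lemma V_ext {a b : V} (h0 : a 0 = b 0) (h1 : a 1 = b 1) (h2 : a 2 = b 2) : a = b := by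
  ext i; fin_cases i <;> assumption

lemma S2_sum (y : S2) : (y:V) 0 ^ 2 + (y:V) 1 ^ 2 + (y:V) 2 ^ 2 = 1 := by
  have := S2_inner y
  rw [V_inner] at this
  linarith

lemma integral_neg0 {E : Type*} [NormedAddCommGroup E] [NormedSpace ℝ E] {μ : Measure S2} (hμ : InvM μ)
    (G : ℝ → ℝ → ℝ → E) :
    ∫ y : S2, G (-(y:V) 0) ((y:V) 1) ((y:V) 2) ∂μ = ∫ y : S2, G ((y:V) 0) ((y:V) 1) ((y:V) 2) ∂μ := by
  rw [← integral_frame' hμ !₂[-1,0,0] !₂[0,1,0] !₂[0,0,1]]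
  · simp [V_inner]
  all_goals (rw [V_inner]; simp)

lemma integral_neg1 {E : Type*} [NormedAddCommGroup E] [NormedSpace ℝ E] {μ : Measure S2} (hμ : InvM μ)
    (G : ℝ → ℝ → ℝ → E) :
    ∫ y : S2, G ((y:V) 0) (-(y:V) 1) ((y:V) 2) ∂μ = ∫ y : S2, G ((y:V) 0) ((y:V) 1) ((y:V) 2) ∂μ := by
  rw [← integral_frame' hμ !₂[1,0,0] !₂[0,-1,0] !₂[0,0,1]]
  · simp [V_inner]
  all_goals (rw [V_inner]; simp)

lemma integral_neg2 {E : Type*} [NormedAddCommGroup E] [NormedSpace ℝ E] {μ : Measure S2} (hμ : InvM μ)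
    (G : ℝ → ℝ → ℝ → E) :
    ∫ y : S2, G ((y:V) 0) ((y:V) 1) (-(y:V) 2) ∂μ = ∫ y : S2, G ((y:V) 0) ((y:V) 1) ((y:V) 2) ∂μ := by
  rw [← integral_frame' hμ !₂[1,0,0] !₂[0,1,0] !₂[0,0,-1]]
  · simp [V_inner]
  all_goals (rw [V_inner]; simp)

lemma integral_swap01 {E : Type*} [NormedAddCommGroup E] [NormedSpace ℝ E] {μ : Measure S2} (hμ : InvM μ)
    (G : ℝ → ℝ → ℝ → E) :
    ∫ y : S2, G ((y:V) 1) ((y:V) 0) ((y:V) 2) ∂μ = ∫ y : S2, G ((y:V) 0) ((y:V) 1) ((y:V) 2) ∂μ := by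
  rw [← integral_frame' hμ !₂[0,1,0] !₂[1,0,0] !₂[0,0,1]]
  · simp [V_inner]
  all_goals (rw [V_inner]; simp)

lemma integral_swap02 {E : Type*} [NormedAddCommGroup E] [NormedSpace ℝ E] {μ : Measure S2} (hμ : InvM μ)
    (G : ℝ → ℝ → ℝ → E) :
    ∫ y : S2, G ((y:V) 2) ((y:V) 1) ((y:V) 0) ∂μ = ∫ y : S2, G ((y:V) 0) ((y:V) 1) ((y:V) 2) ∂μ := by
  rw [← integral_frame' hμ !₂[0,0,1] !₂[0,1,0] !₂[1,0,0]]
  · simp [V_inner]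
  all_goals (rw [V_inner]; simp)

lemma cint {E : Type*} [NormedAddCommGroup E] {μ : Measure S2} [IsProbabilityMeasure μ] {f : S2 → E}
    (hf : Continuous f) : Integrable f μ :=
  hf.integrable_of_hasCompactSupport (HasCompactSupport.of_compactSpace f)

@[fun_prop]
lemma continuous_coordS (i : Fin 3) : Continuous (fun y : S2 => (y:V) i) := by fun_prop

/-- For unit `x` and any `b`, a frame adapted to both. -/
lemma exists_frame_pair (x b : V) (hx : ⟪x,x⟫ = 1) :
    ∃ B : OrthonormalBasis (Fin 3) ℝ V, B 2 = x ∧ ⟪B 1, b⟫ = 0 := by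
  have hex : ∃ m : V, ⟪m, m⟫ = 1 ∧ ⟪m,x⟫ = 0 ∧ ⟪m,b⟫ = 0 := by
    have hlt : Module.finrank ℝ (Submodule.span ℝ ({x,b} : Set V)) < 3 := by
      refine lt_of_le_of_lt (finrank_span_le_card _) ?_
      rw [Set.toFinset_insert, Set.toFinset_singleton]
      exact lt_of_le_of_lt (Finset.card_insert_le _ _) (by simp)
    have hne : (Submodule.span ℝ ({x,b} : Set V))ᗮ ≠ ⊥ := by
      intro h
      rw [Submodule.orthogonal_eq_bot_iff] at h
      rw [h] at hlt
      simp at hlt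
    obtain ⟨m, hm, hm0⟩ := Submodule.exists_mem_ne_zero_of_ne_bot hne
    have hn : ‖m‖ ≠ 0 := norm_ne_zero_iff.2 hm0
    have hmx : ⟪m,x⟫ = 0 := by
      rw [real_inner_comm]; exact hm x (Submodule.subset_span (by simp))
    have hmb : ⟪m,b⟫ = 0 := by
      rw [real_inner_comm]; exact hm b (Submodule.subset_span (by simp))
    refine ⟨‖m‖⁻¹ • m, ?_, ?_, ?_⟩
    · simp only [inner_smul_left, inner_smul_right, real_inner_self_eq_norm_sq]
      simp; field_simp
    · simp [inner_smul_left, hmx]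
    · simp [inner_smul_left, hmb]
  obtain ⟨m, hmm, hmx, hmb⟩ := hex
  have hex2 : ∃ p : V, ⟪p, p⟫ = 1 ∧ ⟪p,m⟫ = 0 ∧ ⟪p,x⟫ = 0 := by
    refine ⟨!₂[m 1 * x 2 - m 2 * x 1, m 2 * x 0 - m 0 * x 2, m 0 * x 1 - m 1 * x 0], ?_, ?_, ?_⟩
    · simp only [V_inner] at *
      simp only [PiLp.toLp_apply, Matrix.cons_val]
      linear_combination (x 0 * x 0 + x 1 * x 1 + x 2 * x 2) * hmm + hx - (m 0 * x 0 + m 1 * x 1 + m 2 * x 2) * hmx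
    · simp only [V_inner] at *
      simp only [PiLp.toLp_apply, Matrix.cons_val]
      ring
    · simp only [V_inner] at *
      simp only [PiLp.toLp_apply, Matrix.cons_val]
      ring
  obtain ⟨p, hpp, hpm, hpx⟩ := hex2
  obtain ⟨B, h0, h1, h2⟩ := exists_frame p m x hpp hmm hx hpm hpx hmx
  exact ⟨B, h2, by rw [h1]; exact hmb⟩

lemma integral_zonal {E : Type*} [NormedAddCommGroup E] [NormedSpace ℝ E] {μ : Measure S2} (hμ : InvM μ)
    (u : V) (huu : ⟪u,u⟫ = 1) (G : ℝ → E) :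
    ∫ y : S2, G ⟪u, (y:V)⟫ ∂μ = ∫ y : S2, G ((y:V) 2) ∂μ := by
  obtain ⟨B, h2, -⟩ := exists_frame_pair u 0 huu
  have := integral_frame hμ B (fun _ _ c => G c)
  rw [h2] at this
  exact this

lemma openPos {μ : Measure S2} [IsProbabilityMeasure μ] (hμ : InvM μ) : μ.IsOpenPosMeasure := by
  constructor
  intro U hU hne h0
  have : μ Set.univ = 0 := by
    apply measure_null_of_locally_null
    intro x _
    obtain ⟨u, hu⟩ := hne
    obtain ⟨B, h2, -⟩ := exists_frame_pair (x:V) 0 (S2_inner x)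
    obtain ⟨B', h2', -⟩ := exists_frame_pair (u:V) 0 (S2_inner u)
    let g := B.repr.trans B'.repr.symm
    have hg : sphereMap g x = u := by
      ext1
      simp only [sphereMap, g, ← h2, ← h2']
      simp
    refine ⟨sphereMap g ⁻¹' U, ?_, ?_⟩
    · apply mem_nhdsWithin_of_mem_nhds
      exact (hU.preimage (continuous_sphereMap g)).mem_nhds (by simpa [hg] using hu)
    · rw [(hμ g).measure_preimage hU.measurableSet.nullMeasurableSet, h0]
  simp at this

open scoped RealInnerProductSpace

/-- Mean of a polynomial in the last coordinate. -/
def Imean (μ : Measure S2) (F : Polynomial ℝ) : ℝ := ∫ y : S2, F.eval ((y:V) 2) ∂μ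

@[fun_prop]
lemma continuous_evalP {X : Type*} [TopologicalSpace X] (F : Polynomial ℝ) {f : X → ℝ} (hf : Continuous f) :
    Continuous (fun x => F.eval (f x)) := F.continuous.comp hf

lemma Imean_add (μ : Measure S2) [IsProbabilityMeasure μ] (F G : Polynomial ℝ) :
    Imean μ (F + G) = Imean μ F + Imean μ G := by
  unfold Imean
  rw [← integral_add (cint (by fun_prop)) (cint (by fun_prop))]
  simp

lemma Imean_C_mul (μ : Measure S2) (c : ℝ) (F : Polynomial ℝ) :
    Imean μ (Polynomial.C c * F) = c * Imean μ F := by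
  unfold Imean
  rw [← integral_const_mul]
  simp

lemma moment_odd {μ : Measure S2} (hμ : InvM μ) (k : ℕ) :
    ∫ y : S2, ((y:V) 2)^(2*k+1) ∂μ = 0 := by
  have h := integral_neg2 hμ (fun _ _ c => c^(2*k+1))
  have : ∀ y : S2, (-(y:V) 2)^(2*k+1) = - ((y:V) 2)^(2*k+1) := fun y => Odd.neg_pow ⟨k, rfl⟩ _
  simp only [this, integral_neg] at h
  linarith

lemma moment_rot {μ : Measure S2} (hμ : InvM μ) (k : ℕ) (s : ℝ) :
    ∫ y : S2, ((y:V) 0 + s * (y:V) 2)^(2*k) ∂μ = (1+s^2)^k * ∫ y : S2, ((y:V) 2)^(2*k) ∂μ := by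
  have hs : 0 < 1 + s^2 := by positivity
  have hr : Real.sqrt (1+s^2) ^ 2 = 1 + s^2 := Real.sq_sqrt hs.le
  have hr0 : Real.sqrt (1+s^2) ≠ 0 := (Real.sqrt_pos.2 hs).ne'
  set r := Real.sqrt (1+s^2)
  have h := integral_zonal hμ !₂[1/r, 0, s/r] (by
    rw [V_inner]; simp; field_simp; linarith) (fun c => c^(2*k))
  rw [← h, ← integral_const_mul]
  congr 1
  ext y
  rw [V_inner]
  simp only [Matrix.cons_val]
  rw [pow_mul, pow_mul, ← mul_pow, ← hr]
  congr 1
  field_simp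
  ring

lemma moment_mixed {μ : Measure S2} [IsProbabilityMeasure μ] (hμ : InvM μ) (k : ℕ) :
    ((2*k+2).choose 2 : ℝ) * ∫ y : S2, ((y:V) 0)^(2*k) * ((y:V) 2)^2 ∂μ = (k+1) * ∫ y : S2, ((y:V) 2)^(2*k+2) ∂μ := by
  let P : Polynomial ℝ := ∑ j ∈ Finset.range (2*k+2+1), Polynomial.monomial j
    (∫ y : S2, ((y:V) 2)^j * ((y:V) 0)^(2*k+2-j) * ((2*k+2).choose j : ℝ) ∂μ)
  let Q : Polynomial ℝ := Polynomial.expand ℝ 2 ((1+Polynomial.X)^(k+1)) * Polynomial.C (∫ y : S2, ((y:V) 2)^(2*k+2) ∂μ)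
  have hPQ : P = Q := by
    apply Polynomial.funext
    intro s
    have := moment_rot hμ (k+1) s
    simp only [P, Q, Polynomial.eval_finsetSum, Polynomial.eval_monomial, Polynomial.eval_mul, Polynomial.expand_eval, Polynomial.eval_pow,
      Polynomial.eval_add, Polynomial.eval_one, Polynomial.eval_X, Polynomial.eval_C]
    rw [show 2*k+2 = 2*(k+1) by ring, ← this]
    simp_rw [← integral_mul_const]
    rw [← integral_finsetSum]
    · congr 1
      ext y
      rw [add_comm ((y:V) 0), add_pow]
      apply Finset.sum_congr rfl
      intro j _
      rw [mul_pow]; ring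
    · intro j _
      exact cint (by fun_prop)
  have hc := congrArg (fun p => Polynomial.coeff p 2) hPQ
  simp only [P, Q, Polynomial.finsetSum_coeff, Polynomial.coeff_monomial, Polynomial.coeff_mul_C] at hc
  rw [Finset.sum_ite_eq' ] at hc
  have hco : (Polynomial.expand ℝ 2 ((1+Polynomial.X)^(k+1))).coeff 2 = (k+1 : ℝ) := by
    have := Polynomial.coeff_expand_mul (R := ℝ) (p := 2) (by norm_num) ((1+Polynomial.X)^(k+1)) 1
    rw [Polynomial.coeff_one_add_X_pow] at this
    simpa using this
  rw [if_pos (by simp), hco] at hc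
  norm_num at hc
  rw [← hc, integral_mul_const, mul_comm]
  congr 2
  ext y; ring

lemma moment_rec {μ : Measure S2} [IsProbabilityMeasure μ] (hμ : InvM μ) (k : ℕ) :
    (2*k+3 : ℝ) * ∫ y : S2, ((y:V) 2)^(2*k+2) ∂μ = (2*k+1) * ∫ y : S2, ((y:V) 2)^(2*k) ∂μ := by
  have h1 := moment_mixed hμ k
  have h2 : ∫ y : S2, ((y:V) 0)^(2*k) * ((y:V) 1)^2 ∂μ = ∫ y : S2, ((y:V) 0)^(2*k) * ((y:V) 2)^2 ∂μ := by
    rw [integral_swap02 hμ (fun a b c => c^(2*k) * b^2) |>.symm |>.symm]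
    rw [← integral_swap01 hμ (fun a b c => c^(2*k) * b^2)]
    rw [← integral_swap02 hμ (fun a b c => c^(2*k) * a^2)]
  have h3 : ∫ y : S2, ((y:V) 0)^(2*k) * ((y:V) 0)^2 ∂μ = ∫ y : S2, ((y:V) 2)^(2*k+2) ∂μ := by
    rw [integral_swap02 hμ (fun a b c => c^(2*k) * c^2)]
    simp_rw [pow_add]
  have h4 : ∫ y : S2, ((y:V) 2)^(2*k) ∂μ = ∫ y : S2, ((y:V) 0)^(2*k) * ((y:V) 0)^2 ∂μ + ∫ y : S2, ((y:V) 0)^(2*k) * ((y:V) 1)^2 ∂μ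
     + ∫ y : S2, ((y:V) 0)^(2*k) * ((y:V) 2)^2 ∂μ := by
    rw [← integral_add (cint (by fun_prop)) (cint (by fun_prop)), ← integral_add (cint (by fun_prop)) (cint (by fun_prop))]
    rw [← integral_swap02 hμ (fun a b c => c^(2*k))]
    congr 1
    ext y
    have := S2_sum y
    linear_combination -((y:V) 0)^(2*k) * this
  rw [h2, h3] at h4
  rw [Nat.cast_choose_two] at h1
  push_cast at h1
  have hk : (k:ℝ) + 1 ≠ 0 := by positivity
  have h5 : (2*k+1 : ℝ) * ∫ y : S2, ((y:V) 0)^(2*k) * ((y:V) 2)^2 ∂μ = ∫ y : S2, ((y:V) 2)^(2*k+2) ∂μ := by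
    apply mul_left_cancel₀ hk
    rw [← h1]; ring
  linear_combination -(2*k+1 : ℝ) * h4 - 2 * h5

lemma moment_even {μ : Measure S2} [IsProbabilityMeasure μ] (hμ : InvM μ) (k : ℕ) :
    (2*k+1 : ℝ) * ∫ y : S2, ((y:V) 2)^(2*k) ∂μ = 1 := by
  induction k with
  | zero => simp
  | succ k ih =>
    have := moment_rec hμ k
    rw [ih] at this
    rw [show 2*(k+1) = 2*k+2 by ring]
    push_cast
    linear_combination this

lemma Imean_deriv {μ : Measure S2} [IsProbabilityMeasure μ] (hμ : InvM μ) (F : Polynomial ℝ) :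
    Imean μ (Polynomial.derivative F) = (F.eval 1 - F.eval (-1)) / 2 := by
  induction F using Polynomial.induction_on' with
  | add p q hp hq =>
    rw [Polynomial.derivative_add, Imean_add, hp, hq]; simp; ring
  | monomial n a =>
    rw [Polynomial.derivative_monomial]
    cases n with
    | zero => simp [Imean]
    | succ n =>
      simp only [Imean, Polynomial.eval_monomial, Nat.add_sub_cancel]
      rw [integral_const_mul]
      rcases Nat.even_or_odd' n with ⟨k, rfl | rfl⟩
      · have := moment_even hμ k
        have h2 : (-1:ℝ)^(2*k+1) = -1 := Odd.neg_one_pow ⟨k, rfl⟩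
        rw [h2]
        push_cast
        linear_combination a * this
      · rw [moment_odd hμ]
        have h2 : (-1:ℝ)^(2*k+1+1) = 1 := Even.neg_one_pow ⟨k+1, by ring⟩
        rw [h2]; simp

lemma measure_poles {μ : Measure S2} [IsProbabilityMeasure μ] (hμ : InvM μ) (x : S2) :
    ∀ᵐ y : S2 ∂μ, 1 - ⟪(x:V), (y:V)⟫^2 ≠ 0 := by
  rw [ae_iff]
  set s : Set S2 := {y : S2 | ¬ (1 - ⟪(x:V), (y:V)⟫^2 ≠ 0)} with hs
  have hsm : MeasurableSet s := by
    have : s = {y : S2 | 1 - ⟪(x:V), (y:V)⟫^2 = 0} := by ext; simp [hs]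
    rw [this]
    exact (isClosed_eq (by fun_prop) (by fun_prop)).measurableSet
  have hb : ∀ k : ℕ, (2*k+1) * μ.real s ≤ 1 := by
    intro k
    have h1 := moment_even hμ k
    rw [← integral_zonal hμ (x:V) (S2_inner x) (fun c => c^(2*k))] at h1
    refine le_trans ?_ h1.le
    gcongr
    rw [← integral_indicator_one hsm]
    apply integral_mono
    · exact (integrable_const (1:ℝ)).indicator hsm
    · exact cint (by fun_prop)
    · intro y
      by_cases hy : y ∈ s
      · simp only [Set.indicator_of_mem hy, Pi.one_apply]
        have : ⟪(x:V), (y:V)⟫^2 = 1 := by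
          have : ¬ (1 - ⟪(x:V), (y:V)⟫^2 ≠ 0) := hy
          push Not at this
          linarith
        rw [pow_mul, this, one_pow]
      · simp only [Set.indicator_of_notMem hy]
        rw [pow_mul]; positivity
  have h0 : μ.real s = 0 := by
    by_contra hne
    have hpos : 0 < μ.real s := lt_of_le_of_ne measureReal_nonneg (Ne.symm hne)
    obtain ⟨k, hk⟩ := exists_nat_gt (1 / μ.real s)
    have := hb k
    rw [div_lt_iff₀ hpos] at hk
    nlinarith [mul_nonneg (Nat.cast_nonneg (α := ℝ) k) hpos.le]
  rwa [measureReal_eq_zero_iff] at h0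

open scoped RealInnerProductSpace

@[fun_prop]
lemma measurable_coordS (i : Fin 3) : Measurable (fun y : S2 => (y:V) i) := (continuous_coordS i).measurable

/-- the weight -/
def ww (y : S2) : ℝ := ((y:V) 0)^2 / (1 + (y:V) 2)

lemma S2_coord_le (y : S2) (i : Fin 3) : |(y:V) i| ≤ 1 := by
  have h := S2_sum y
  rw [← sq_le_one_iff_abs_le_one]
  fin_cases i <;> simp only [Fin.zero_eta, Fin.mk_one, Fin.reduceFinMk] <;> nlinarith [sq_nonneg ((y:V) 0), sq_nonneg ((y:V) 1), sq_nonneg ((y:V) 2)]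

lemma ww_nonneg (y : S2) : 0 ≤ ww y := by
  have h := (abs_le.1 (S2_coord_le y 2)).1
  unfold ww
  apply div_nonneg (sq_nonneg _) (by linarith)

lemma ww_le (y : S2) : ww y ≤ 2 := by
  have h := (abs_le.1 (S2_coord_le y 2))
  have h2 := S2_sum y
  unfold ww
  apply div_le_of_le_mul₀ (by linarith) (by norm_num)
  nlinarith [sq_nonneg ((y:V) 1)]

@[fun_prop]
lemma ww_meas : Measurable ww := by unfold ww; fun_prop

lemma int_mul_ww {μ : Measure S2} [IsProbabilityMeasure μ] {f : S2 → ℝ} (hf : Continuous f) :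
    Integrable (fun y => f y * ww y) μ := by
  apply (cint hf).mul_bdd (c := 2) ww_meas.aestronglyMeasurable
  filter_upwards with y
  rw [Real.norm_eq_abs, abs_of_nonneg (ww_nonneg y)]
  exact ww_le y

/-- coefficients -/
def eC (μ : Measure S2) (m k : ℕ) : ℝ := ∫ y : S2, ((y:V) 0)^k * ((y:V) 2)^(m-k) * (1 - ww y) ∂μ
def aC (μ : Measure S2) (m k : ℕ) : ℝ := ∫ y : S2, ((y:V) 0)^(k+1) * ((y:V) 2)^(m-k) ∂μ

open Classical in
def LP (μ : Measure S2) (m : ℕ) : Polynomial ℝ :=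
  ∑ k ∈ Finset.range (m+1), Polynomial.C (m.choose k : ℝ) *
    (if Even k then Polynomial.C (eC μ m k) * ((1 - Polynomial.X^2)^(k/2) * Polynomial.X^(m-k))
      else Polynomial.C (- aC μ m k) * ((1 - Polynomial.X^2)^(k/2) * Polynomial.X^(m-k+1)))

lemma eC_odd {μ : Measure S2} (hμ : InvM μ) (m k : ℕ) (hk : ¬ Even k) : eC μ m k = 0 := by
  have hk := Nat.not_even_iff_odd.1 hk
  have h := integral_neg0 hμ (fun a b c => a^k * c^(m-k) * (1 - a^2/(1+c)))
  simp only [neg_sq, hk.neg_pow, neg_mul, integral_neg] at h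
  unfold eC ww
  linarith

lemma aC_even {μ : Measure S2} (hμ : InvM μ) (m k : ℕ) (hk : Even k) : aC μ m k = 0 := by
  have h := integral_neg0 hμ (fun a b c => a^(k+1) * c^(m-k))
  simp only [hk.add_one.neg_pow, neg_mul, integral_neg] at h
  unfold aC
  linarith

lemma LP_eval {μ : Measure S2} [IsProbabilityMeasure μ] (hμ : InvM μ) (m : ℕ) (r c : ℝ) (h : r^2 + c^2 = 1) :
    ∫ y : S2, (r * (y:V) 0 + c * (y:V) 2)^m * (r * (1 - ww y) - c * (y:V) 0) ∂μ = r * (LP μ m).eval c := by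
  have h1 : ∀ y : S2, (r * (y:V) 0 + c * (y:V) 2)^m * (r * (1 - ww y) - c * (y:V) 0) =
      ∑ k ∈ Finset.range (m+1), (((m.choose k : ℝ) * r^k * c^(m-k) * r) * (((y:V) 0)^k * ((y:V) 2)^(m-k) * (1 - ww y))
        - ((m.choose k : ℝ) * r^k * c^(m-k) * c) * (((y:V) 0)^(k+1) * ((y:V) 2)^(m-k))) := by
    intro y
    rw [add_pow, Finset.sum_mul]
    apply Finset.sum_congr rfl
    intro k _
    rw [mul_pow, mul_pow]
    ring
  have hi1 : ∀ k, Integrable (fun y : S2 => ((y:V) 0)^k * ((y:V) 2)^(m-k) * (1 - ww y)) μ := by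
    intro k
    simp_rw [mul_sub, mul_one]
    exact (cint (by fun_prop)).sub (int_mul_ww (by fun_prop))
  have hi2 : ∀ k, Integrable (fun y : S2 => ((y:V) 0)^(k+1) * ((y:V) 2)^(m-k)) μ := fun k => cint (by fun_prop)
  simp_rw [h1]
  rw [integral_finsetSum]
  swap
  · intro k _
    exact ((hi1 k).const_mul _).sub ((hi2 k).const_mul _)
  unfold LP
  rw [Polynomial.eval_finsetSum, Finset.mul_sum]
  apply Finset.sum_congr rfl
  intro k _
  rw [integral_sub ((hi1 k).const_mul _) ((hi2 k).const_mul _), integral_const_mul, integral_const_mul]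
  change (_ * eC μ m k - _ * aC μ m k) = _
  have hr : 1 - c^2 = r^2 := by linarith
  split_ifs with hk
  · rw [aC_even hμ m k hk]
    simp only [Polynomial.eval_mul, Polynomial.eval_C, Polynomial.eval_pow, Polynomial.eval_sub, Polynomial.eval_one, Polynomial.eval_X, hr]
    rw [← pow_mul, Nat.two_mul_div_two_of_even hk]
    ring
  · rw [eC_odd hμ m k hk]
    simp only [Polynomial.eval_mul, Polynomial.eval_C, Polynomial.eval_pow, Polynomial.eval_sub, Polynomial.eval_one, Polynomial.eval_X, hr]
    have : r^k = r * (r^2)^(k/2) := by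
      rw [← pow_mul, ← pow_succ']
      congr 1
      have := Nat.two_mul_div_two_add_one_of_odd (Nat.not_even_iff_odd.1 hk)
      omega
    rw [this]
    ring

lemma LP_natDegree (μ : Measure S2) (m : ℕ) : (LP μ m).natDegree ≤ m := by
  unfold LP
  apply Polynomial.natDegree_sum_le_of_forall_le
  intro k hk
  have hk : k ≤ m := by simpa [Nat.lt_succ_iff] using hk
  have hd : ((1 - Polynomial.X^2 : Polynomial ℝ)^(k/2)).natDegree ≤ (k/2)*2 := by
    refine Polynomial.natDegree_pow_le.trans ?_
    gcongr
    compute_degree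
  have h3 : ∀ j, ((1 - Polynomial.X^2 : Polynomial ℝ)^(k/2) * Polynomial.X^j).natDegree ≤ (k/2)*2 + j := by
    intro j
    refine Polynomial.natDegree_mul_le.trans ?_
    gcongr
    simp
  refine (Polynomial.natDegree_C_mul_le _ _).trans ?_
  split_ifs with he
  · refine (Polynomial.natDegree_C_mul_le _ _).trans ((h3 _).trans ?_)
    omega
  · refine (Polynomial.natDegree_C_mul_le _ _).trans ((h3 _).trans ?_)
    have := Nat.two_mul_div_two_add_one_of_odd (Nat.not_even_iff_odd.1 he)
    omega

lemma integral_sq0 {μ : Measure S2} (hμ : InvM μ) (K : ℝ → ℝ)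
    (hK : Integrable (fun y : S2 => ((y:V) 0)^2 * K ((y:V) 2)) μ) :
    ∫ y : S2, ((y:V) 0)^2 * K ((y:V) 2) ∂μ = (∫ y : S2, (1 - ((y:V) 2)^2) * K ((y:V) 2) ∂μ) / 2 := by
  have h1 := integral_swap01 hμ (fun a b c => a^2 * K c)
  have hK' : Integrable (fun y : S2 => ((y:V) 1)^2 * K ((y:V) 2)) μ := by
    obtain ⟨B, h0, h1, h2⟩ := exists_frame !₂[0,1,0] !₂[1,0,0] !₂[0,0,1] (by rw [V_inner]; simp) (by rw [V_inner]; simp)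
      (by rw [V_inner]; simp) (by rw [V_inner]; simp) (by rw [V_inner]; simp) (by rw [V_inner]; simp)
    have := (hμ B.repr).integrable_comp_of_integrable hK
    convert this using 2 with y
    simp only [sphereMap, Function.comp, OrthonormalBasis.repr_apply_apply]
    rw [h0, h2]
    simp [V_inner]
  have h2 : ∫ y : S2, (1 - ((y:V) 2)^2) * K ((y:V) 2) ∂μ = ∫ y : S2, ((y:V) 0)^2 * K ((y:V) 2) ∂μ + ∫ y : S2, ((y:V) 1)^2 * K ((y:V) 2) ∂μ := by
    rw [← integral_add hK hK']
    congr 1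
    ext y
    linear_combination - K ((y:V) 2) * S2_sum y
  linarith

lemma ae_pole {μ : Measure S2} [IsProbabilityMeasure μ] (hμ : InvM μ) : ∀ᵐ y : S2 ∂μ, 1 + (y:V) 2 ≠ 0 := by
  have hx : ⟪(!₂[0,0,1] : V), !₂[0,0,1]⟫ = 1 := by rw [V_inner]; simp
  have := measure_poles hμ ⟨!₂[0,0,1], by
    rw [mem_sphere_zero_iff_norm]
    rw [real_inner_self_eq_norm_sq] at hx
    exact (pow_eq_one_iff_of_nonneg (norm_nonneg _) two_ne_zero).1 hx⟩
  filter_upwards [this] with y hy h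
  apply hy
  simp only [V_inner, Matrix.cons_val]
  linear_combination (1 - (y:V) 2) * h

open Polynomial in
lemma LP_one {μ : Measure S2} [IsProbabilityMeasure μ] (hμ : InvM μ) (m : ℕ) :
    (LP μ m).eval 1 = Imean μ ((1 - X) * X^m) / 2 := by
  have h1 : (LP μ m).eval 1 = eC μ m 0 - m * aC μ m 1 := by
    unfold LP
    rw [Polynomial.eval_finsetSum]
    rcases m with _ | m
    · simp
    · rw [Finset.sum_range_succ', Finset.sum_range_succ']
      rw [Finset.sum_eq_zero]
      · simp
        ring
      · intro k _
        have : (k+1+1)/2 = k/2+1 := by omega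
        rw [this]
        split_ifs <;> simp
  have hi1 : Integrable (fun y : S2 => ((y:V) 0)^2 * (fun t => t^m / (1+t)) ((y:V) 2)) μ := by
    refine (int_mul_ww (f := fun y : S2 => ((y:V) 2)^m) (by fun_prop)).congr ?_
    filter_upwards with y
    unfold ww
    ring
  have h2 : eC μ m 0 = Imean μ (X^m) - Imean μ (X^m - X^(m+1)) / 2 := by
    have e1 : eC μ m 0 = ∫ y : S2, ((y:V) 2)^m ∂μ - ∫ y : S2, ((y:V) 0)^2 * (fun t => t^m / (1+t)) ((y:V) 2) ∂μ := by
      unfold eC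
      rw [← integral_sub (cint (by fun_prop)) hi1]
      congr 1
      ext y
      unfold ww
      simp
      ring
    rw [e1, integral_sq0 hμ (fun t => t^m / (1+t)) hi1]
    unfold Imean
    congr 2
    · simp
    · apply integral_congr_ae
      filter_upwards [ae_pole hμ] with y hy
      simp
      field_simp
      ring
  have h3 : m * aC μ m 1 = Imean μ (X^(m+1)) := by
    unfold aC
    rcases m with _ | m
    · have := moment_odd hμ 0
      simp [Imean] at this ⊢
      exact this.symm
    · have e := integral_sq0 hμ (fun t => t^m) (cint (μ := μ) (by fun_prop))
      simp only [Nat.add_sub_cancel]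
      rw [show (1+1 : ℕ) = 2 from rfl, e]
      have e2 := Imean_deriv hμ ((1 - X^2) * X^(m+1) : Polynomial ℝ)
      have e3 : derivative ((1 - X^2) * X^(m+1) : Polynomial ℝ) = C (-2 : ℝ) * X^(m+2) + C ((m:ℝ)+1) * ((1-X^2) * X^m) := by
        have hC : (C (2:ℝ) : Polynomial ℝ) = 2 := map_ofNat _ _
        simp [derivative_mul, Polynomial.derivative_X_pow, hC]
        ring
      rw [e3, Imean_add, Imean_C_mul, Imean_C_mul] at e2
      simp at e2
      have e4 : Imean μ ((1-X^2) * X^m : Polynomial ℝ) = ∫ y : S2, (1 - ((y:V) 2)^2) * ((y:V) 2)^m ∂μ := by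
        unfold Imean; simp
      rw [← e4]
      push_cast
      linear_combination e2 / 2
  have h4 : Imean μ ((1 - X) * X^m) = Imean μ (X^m - X^(m+1)) := by congr 1; ring
  have h5 : Imean μ (X^m : Polynomial ℝ) = Imean μ (X^m - X^(m+1)) + Imean μ (X^(m+1)) := by
    rw [← Imean_add]; congr 1; ring
  rw [h1, h2, h3, h4]
  linarith

open scoped RealInnerProductSpace

/-- cross product on `V`. -/
def crossV (a b : V) : V := !₂[a 1 * b 2 - a 2 * b 1, a 2 * b 0 - a 0 * b 2, a 0 * b 1 - a 1 * b 0]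

@[simp] lemma crossV_0 (a b : V) : crossV a b 0 = a 1 * b 2 - a 2 * b 1 := rfl
@[simp] lemma crossV_1 (a b : V) : crossV a b 1 = a 2 * b 0 - a 0 * b 2 := rfl
@[simp] lemma crossV_2 (a b : V) : crossV a b 2 = a 0 * b 1 - a 1 * b 0 := rfl

/-- cross product as a continuous linear map. -/
def crossL (a : V) : V →L[ℝ] V := LinearMap.toContinuousLinearMap
  { toFun := crossV a
    map_add' := by intro b c; apply V_ext <;> simp <;> ring
    map_smul' := by intro b c; apply V_ext <;> simp <;> ring }

@[simp] lemma crossL_apply (a b : V) : crossL a b = crossV a b := rfl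

@[fun_prop]
lemma continuous_crossV {X : Type*} [TopologicalSpace X] {f g : X → V} (hf : Continuous f) (hg : Continuous g) :
    Continuous (fun x => crossV (f x) (g x)) := by
  unfold crossV
  refine (PiLp.continuous_toLp 2 _).comp ?_
  refine continuous_pi ?_
  intro i
  fin_cases i <;> simp <;> fun_prop

/-- tangent fields -/
def Tan (F : S2 → V) : Prop := ∀ y : S2, ⟪(y:V), F y⟫ = 0

/-- simplified kernel -/
def tk (x y : S2) (v : V) : V := v - (⟪(x:V), v⟫ / (1 + ⟪(x:V), (y:V)⟫)) • ((x:V) + (y:V))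

lemma norm_tk (x y : S2) (v : V) (hv : ⟪(y:V), v⟫ = 0) : ‖tk x y v‖ = ‖v‖ := by
  rw [← sq_eq_sq₀ (norm_nonneg _) (norm_nonneg _), ← real_inner_self_eq_norm_sq, ← real_inner_self_eq_norm_sq]
  have hv' : ⟪v, (y:V)⟫ = 0 := by rw [real_inner_comm]; exact hv
  unfold tk
  by_cases h : 1 + ⟪(x:V), (y:V)⟫ = 0
  · simp [h]
  · simp only [inner_sub_left, inner_sub_right, inner_smul_left, inner_smul_right, inner_add_left, inner_add_right,
      S2_inner, hv, hv', real_inner_comm v, real_inner_comm (x:V) (y:V)]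
    simp
    field_simp
    ring

lemma tk_meas : Measurable (fun p : (S2 × S2) × V => tk p.1.1 p.1.2 p.2) := by
  unfold tk
  have h1 : Measurable (fun p : (S2 × S2) × V => ⟪(p.1.1:V), p.2⟫) := by
    apply Continuous.measurable; fun_prop
  have h2 : Measurable (fun p : (S2 × S2) × V => ⟪(p.1.1:V), (p.1.2 : V)⟫) := by
    apply Continuous.measurable; fun_prop
  have h3 : Measurable (fun p : (S2 × S2) × V => (p.1.1:V) + (p.1.2 : V)) := by
    apply Continuous.measurable; fun_prop
  exact measurable_snd.sub ((h1.div (measurable_const.add h2)).smul h3)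

lemma Tan_bdd {F : S2 → V} (hF : Continuous F) : ∃ C, ∀ y, ‖F y‖ ≤ C := by
  obtain ⟨C, hC⟩ := isCompact_univ.exists_bound_of_continuousOn hF.continuousOn
  exact ⟨C, fun y => hC y trivial⟩

lemma tk_int {μ : Measure S2} [IsProbabilityMeasure μ] {F : S2 → V} (hF : Continuous F) (hT : Tan F) (x : S2) :
    Integrable (fun y => tk x y (F y)) μ := by
  obtain ⟨C, hC⟩ := Tan_bdd hF
  apply Integrable.of_bound (C := C)
  · apply Measurable.aestronglyMeasurable
    have : Measurable (fun y : S2 => (((x, y), F y) : (S2 × S2) × V)) :=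
      (measurable_const.prodMk measurable_id).prodMk hF.measurable
    exact tk_meas.comp this
  · filter_upwards with y
    rw [norm_tk x y _ (hT y)]
    exact hC y

/-- the operator on functions -/
def Tint (μ : Measure S2) (F : S2 → V) (x : S2) : V := ∫ y, tk x y (F y) ∂μ

/-- zonal fields -/
def Zf (F : Polynomial ℝ) (b : V) (y : S2) : V := F.eval ⟪b, (y:V)⟫ • (b - ⟪b, (y:V)⟫ • (y:V))

lemma Zf_cont (F : Polynomial ℝ) (b : V) : Continuous (Zf F b) := by
  unfold Zf; fun_prop

lemma Zf_tan (F : Polynomial ℝ) (b : V) : Tan (Zf F b) := by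
  intro y
  unfold Zf
  simp only [inner_smul_right, inner_sub_right, S2_inner, real_inner_comm b]
  ring

lemma S2_ae_pole {μ : Measure S2} [IsProbabilityMeasure μ] (hμ : InvM μ) (x : S2) : ∀ᵐ y : S2 ∂μ, 1 + ⟪(x:V), (y:V)⟫ ≠ 0 := by
  filter_upwards [measure_poles hμ x] with y hy h
  apply hy
  linear_combination (1 - ⟪(x:V), (y:V)⟫) * h

lemma Tint_zonal {μ : Measure S2} [IsProbabilityMeasure μ] (hμ : InvM μ) (m : ℕ) (b : V) (hb : ⟪b,b⟫ = 1) (x : S2) :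
    Tint μ (Zf (Polynomial.X^m) b) x = Zf (LP μ m) b x := by
  obtain ⟨B, hB2, hB1⟩ := exists_frame_pair (x:V) b (S2_inner x)
  have hi := tk_int (μ := μ) (Zf_cont (Polynomial.X^m) b) (Zf_tan _ b) x
  have o00 : ⟪B 0, B 0⟫ = 1 := by rw [real_inner_self_eq_norm_sq, B.orthonormal.1]; norm_num
  have o11 : ⟪B 1, B 1⟫ = 1 := by rw [real_inner_self_eq_norm_sq, B.orthonormal.1]; norm_num
  have o02 : ⟪B 0, B 2⟫ = 0 := B.orthonormal.2 (by decide)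
  have o12 : ⟪B 1, B 2⟫ = 0 := B.orthonormal.2 (by decide)
  have hby : ∀ y : V, ⟪b, y⟫ = ⟪B 0, b⟫ * ⟪B 0, y⟫ + ⟪B 2, b⟫ * ⟪B 2, y⟫ := by
    intro y
    rw [← B.sum_inner_mul_inner b y, Fin.sum_univ_three, real_inner_comm (B 0) b, real_inner_comm (B 1) b, real_inner_comm (B 2) b, hB1]
    ring
  have hrc : ⟪B 0, b⟫^2 + ⟪B 2, b⟫^2 = 1 := by
    rw [hby] at hb; linarith
  have hbx : ⟪b, B 2⟫ = ⟪B 2, b⟫ := by rw [real_inner_comm]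
  set r := ⟪B 0, b⟫ with hr
  set c := ⟪B 2, b⟫ with hc
  have key : ∀ i, ⟪B i, Tint μ (Zf (Polynomial.X^m) b) x⟫ = ⟪B i, Zf (LP μ m) b x⟫ := by
    intro i
    unfold Tint
    rw [← integral_inner hi]
    unfold tk Zf
    simp only [hbx, inner_sub_right, inner_smul_right, inner_add_right, Polynomial.eval_pow, Polynomial.eval_X, ← hB2]
    rw [← hc]
    simp only [hby]
    fin_cases i
    · simp only [Fin.zero_eta]
      rw [integral_frame hμ B (fun y0 y1 y2 => (r * y0 + c * y2)^m * (⟪B 0, b⟫ - (r * y0 + c * y2) * y0) -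
        (r * y0 + c * y2)^m * (c - (r * y0 + c * y2) * y2) / (1 + y2) * (⟪B 0, B 2⟫ + y0))]
      rw [o02, ← hr, mul_zero, sub_zero, mul_comm _ r, ← LP_eval hμ m r c hrc]
      apply integral_congr_ae
      filter_upwards [ae_pole hμ] with y hy
      unfold ww
      field_simp
      ring
    · simp only [Fin.mk_one]
      rw [integral_frame hμ B (fun y0 y1 y2 => (r * y0 + c * y2)^m * (⟪B 1, b⟫ - (r * y0 + c * y2) * y1) -
        (r * y0 + c * y2)^m * (c - (r * y0 + c * y2) * y2) / (1 + y2) * (⟪B 1, B 2⟫ + y1))]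
      rw [o12, hB1]
      have h := integral_neg1 hμ (fun y0 y1 y2 => (r * y0 + c * y2)^m * (0 - (r * y0 + c * y2) * y1) -
        (r * y0 + c * y2)^m * (c - (r * y0 + c * y2) * y2) / (1 + y2) * (0 + y1))
      have h2 : ∀ y0 y1 y2 : ℝ, (r * y0 + c * y2)^m * (0 - (r * y0 + c * y2) * (-y1)) -
        (r * y0 + c * y2)^m * (c - (r * y0 + c * y2) * y2) / (1 + y2) * (0 + (-y1)) = -((r * y0 + c * y2)^m * (0 - (r * y0 + c * y2) * y1) -
        (r * y0 + c * y2)^m * (c - (r * y0 + c * y2) * y2) / (1 + y2) * (0 + y1)) := by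
        intros; ring
      simp only [h2, integral_neg] at h
      simp only [mul_zero, sub_zero]
      linarith
    · simp only [Fin.reduceFinMk]
      have : ⟪B 2, B 2⟫ = 1 := by rw [hB2]; exact S2_inner x
      rw [this, ← hc]
      simp only [mul_one, sub_self, mul_zero]
      rw [← integral_zero S2 ℝ (μ := μ)]
      apply integral_congr_ae
      filter_upwards [S2_ae_pole hμ x] with y hy
      rw [← hB2] at hy
      field_simp
      ring
  apply B.repr.injective
  ext i
  rw [B.repr_apply_apply, B.repr_apply_apply]
  exact key i

lemma crossV_id (A B C D : V) : ⟪A, crossV B C⟫ • D = ⟪A,D⟫ • crossV B C + ⟪B,D⟫ • crossV C A + ⟪C,D⟫ • crossV A B := by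
  apply V_ext <;> simp [V_inner] <;> ring

lemma tk_cross (x y : S2) (v : V) (hv : ⟪(y:V), v⟫ = 0) (h : 1 + ⟪(x:V), (y:V)⟫ ≠ 0) :
    tk x y (crossV y v) = crossV x (tk x y v) := by
  have h1 := crossV_id (x:V) y v ((x:V)+y)
  have h2 : ⟪(x:V), (x:V)+y⟫ = 1 + ⟪(x:V),(y:V)⟫ := by rw [inner_add_right, S2_inner]
  have h3 : ⟪(y:V), (x:V)+y⟫ = 1 + ⟪(x:V),(y:V)⟫ := by rw [inner_add_right, S2_inner, real_inner_comm, add_comm]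
  have h4 : ⟪v, (x:V)+y⟫ = ⟪(x:V),v⟫ := by rw [inner_add_right, real_inner_comm, real_inner_comm (y:V) v, hv, add_zero]
  rw [h2, h3, h4] at h1
  have h5 : (⟪(x:V), crossV y v⟫ / (1 + ⟪(x:V), (y:V)⟫)) • ((x:V) + (y:V)) = crossV y v + crossV v x + (⟪(x:V),v⟫ / (1 + ⟪(x:V), (y:V)⟫)) • crossV x y := by
    rw [div_eq_inv_mul, mul_smul, h1, smul_add, smul_add, smul_smul, smul_smul, smul_smul, inv_mul_cancel₀ h, one_smul, one_smul, div_eq_inv_mul]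
  unfold tk
  rw [h5]
  apply V_ext <;> simp <;> ring

lemma Tint_cross {μ : Measure S2} [IsProbabilityMeasure μ] (hμ : InvM μ) {F : S2 → V} (hF : Continuous F) (hT : Tan F) (x : S2) :
    Tint μ (fun y => crossV y (F y)) x = crossV x (Tint μ F x) := by
  unfold Tint
  rw [← crossL_apply, ← ContinuousLinearMap.integral_comp_comm _ (tk_int hF hT x)]
  apply integral_congr_ae
  filter_upwards [S2_ae_pole hμ x] with y hy
  exact tk_cross x y _ (hT y) hy

lemma tk_sym (x y : S2) (v w : V) (hv : ⟪(y:V), v⟫ = 0) (hw : ⟪(x:V), w⟫ = 0) : ⟪tk x y v, w⟫ = ⟪v, tk y x w⟫ := by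
  have hv' : ⟪v, (y:V)⟫ = 0 := by rw [real_inner_comm]; exact hv
  unfold tk
  simp only [inner_sub_left, inner_sub_right, inner_smul_left, inner_smul_right, inner_add_left, inner_add_right, hv, hw, hv', real_inner_comm v, real_inner_comm (x:V) (y:V)]
  simp
  ring

lemma Tint_sym {μ : Measure S2} [IsProbabilityMeasure μ] {F G : S2 → V} (hF : Continuous F) (hTF : Tan F)
    (hG : Continuous G) (hTG : Tan G) : ∫ x, ⟪Tint μ F x, G x⟫ ∂μ = ∫ x, ⟪F x, Tint μ G x⟫ ∂μ := by
  have h1 : ∀ x, ⟪Tint μ F x, G x⟫ = ∫ y, ⟪tk x y (F y), G x⟫ ∂μ := by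
    intro x
    rw [real_inner_comm]
    unfold Tint
    rw [← integral_inner (tk_int hF hTF x)]
    congr 1; ext y; rw [real_inner_comm]
  have h2 : ∀ y, ⟪F y, Tint μ G y⟫ = ∫ x, ⟪tk x y (F y), G x⟫ ∂μ := by
    intro y
    unfold Tint
    rw [← integral_inner (tk_int hG hTG y)]
    congr 1; ext x; rw [tk_sym x y _ _ (hTF y) (hTG x)]
  simp_rw [h1, h2]
  obtain ⟨C, hC⟩ := Tan_bdd hF
  obtain ⟨D, hD⟩ := Tan_bdd hG
  rw [integral_integral_swap]
  apply Integrable.of_bound (C := C * D)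
  · apply Measurable.aestronglyMeasurable
    have : Measurable (fun p : S2 × S2 => ((p, F p.2) : (S2 × S2) × V)) :=
      measurable_id.prodMk (hF.measurable.comp measurable_snd)
    exact (tk_meas.comp this).inner (hG.measurable.comp measurable_fst)
  · filter_upwards with p
    refine (norm_inner_le_norm _ _).trans ?_
    show ‖tk p.1 p.2 (F p.2)‖ * ‖G p.1‖ ≤ _
    rw [norm_tk _ _ _ (hTF _)]
    have := hC p.2
    gcongr
    · exact (norm_nonneg _).trans this
    · exact hD p.1

open scoped RealInnerProductSpace

section eig
open Polynomial

/-- action on zonal profiles -/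
def TP (μ : Measure S2) : Polynomial ℝ →ₗ[ℝ] Polynomial ℝ :=
  Polynomial.lsum (fun m => LinearMap.toSpanSingleton ℝ (Polynomial ℝ) (LP μ m))

lemma TP_monomial (μ : Measure S2) (m : ℕ) (a : ℝ) : TP μ (monomial m a) = a • LP μ m := by
  simp [TP, Polynomial.sum_monomial_index]

lemma Zf_add (F G : Polynomial ℝ) (b : V) (y : S2) : Zf (F + G) b y = Zf F b y + Zf G b y := by
  simp [Zf, add_smul]

lemma Zf_smul (c : ℝ) (F : Polynomial ℝ) (b : V) (y : S2) : Zf (c • F) b y = c • Zf F b y := by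
  simp [Zf, mul_smul]

lemma tk_add (x y : S2) (v w : V) : tk x y (v + w) = tk x y v + tk x y w := by
  simp only [tk, inner_add_right]; module

lemma tk_smul (x y : S2) (c : ℝ) (v : V) : tk x y (c • v) = c • tk x y v := by
  simp only [tk, inner_smul_right, mul_div_assoc]; module

lemma Tint_Zf {μ : Measure S2} [IsProbabilityMeasure μ] (hμ : InvM μ) (F : Polynomial ℝ) (b : V) (hb : ⟪b,b⟫ = 1) (x : S2) :
    Tint μ (Zf F b) x = Zf (TP μ F) b x := by
  induction F using Polynomial.induction_on' with
  | add p q hp hq =>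
    rw [map_add, Zf_add, ← hp, ← hq]
    unfold Tint
    rw [← integral_add (tk_int (Zf_cont p b) (Zf_tan p b) x) (tk_int (Zf_cont q b) (Zf_tan q b) x)]
    simp_rw [Zf_add, tk_add]
  | monomial n a =>
    rw [TP_monomial, Zf_smul, ← Tint_zonal hμ n b hb]
    unfold Tint
    rw [← integral_smul]
    have : (monomial n a : Polynomial ℝ) = a • X^n := by rw [← smul_X_eq_monomial]
    rw [this]
    simp_rw [Zf_smul, tk_smul]

/-- vanishing of high coefficients -/
def SmallC (k : ℕ) (H : Polynomial ℝ) : Prop := ∀ j, k ≤ j → H.coeff j = 0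

lemma TP_small (μ : Measure S2) {m : ℕ} {F : Polynomial ℝ} (hF : SmallC (m+1) F) :
    SmallC (m+1) (TP μ F) ∧ (TP μ F).coeff m = F.coeff m * (LP μ m).coeff m := by
  have hd : F.natDegree < m + 1 := by
    by_contra h
    push Not at h
    have := hF _ h
    rw [← leadingCoeff, leadingCoeff_eq_zero] at this
    subst this
    simp at h
  have hs := Polynomial.as_sum_range' F (m+1) hd
  have hLP : ∀ i j, i < j → (LP μ i).coeff j = 0 := fun i j h =>
    coeff_eq_zero_of_natDegree_lt (lt_of_le_of_lt (LP_natDegree μ i) h)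
  have hc : ∀ j, (TP μ F).coeff j = ∑ i ∈ Finset.range (m+1), F.coeff i * (LP μ i).coeff j := by
    intro j
    conv_lhs => rw [hs]
    rw [map_sum, finsetSum_coeff]
    simp only [TP_monomial, coeff_smul, smul_eq_mul]
  constructor
  · intro j hj
    rw [hc]
    apply Finset.sum_eq_zero
    intro i hi
    rw [hLP i j (by simp at hi; omega), mul_zero]
  · rw [hc, Finset.sum_range_succ, Finset.sum_eq_zero, zero_add]
    intro i hi
    rw [hLP i m (by simpa using hi), mul_zero]

lemma TP_one {μ : Measure S2} [IsProbabilityMeasure μ] (hμ : InvM μ) (F : Polynomial ℝ) :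
    (TP μ F).eval 1 = Imean μ ((1 - X) * F) / 2 := by
  induction F using Polynomial.induction_on' with
  | add p q hp hq =>
    rw [map_add, eval_add, hp, hq, mul_add, Imean_add]; ring
  | monomial n a =>
    rw [TP_monomial, eval_smul, LP_one hμ, ← C_mul_X_pow_eq_monomial, mul_left_comm, Imean_C_mul, smul_eq_mul]
    ring

lemma inner_Zf (F G : Polynomial ℝ) (b : V) (hb : ⟪b,b⟫ = 1) (x : S2) :
    ⟪Zf F b x, Zf G b x⟫ = F.eval ⟪b,(x:V)⟫ * G.eval ⟪b,(x:V)⟫ * (1 - ⟪b,(x:V)⟫^2) := by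
  unfold Zf
  simp only [inner_smul_left, inner_smul_right, inner_sub_left, inner_sub_right, hb, S2_inner, real_inner_comm b]
  simp; ring

lemma TP_sym {μ : Measure S2} [IsProbabilityMeasure μ] (hμ : InvM μ) (F G : Polynomial ℝ) :
    Imean μ (TP μ F * G * (1 - X^2)) = Imean μ (F * TP μ G * (1 - X^2)) := by
  have hb : ⟪(!₂[0,0,1] : V), !₂[0,0,1]⟫ = 1 := by rw [V_inner]; simp
  have h := Tint_sym (μ := μ) (Zf_cont F !₂[0,0,1]) (Zf_tan F _) (Zf_cont G !₂[0,0,1]) (Zf_tan G _)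
  simp_rw [Tint_Zf hμ _ _ hb, inner_Zf _ _ _ hb] at h
  have h2 : ∀ y : S2, ⟪(!₂[0,0,1] : V), (y:V)⟫ = (y:V) 2 := by intro y; rw [V_inner]; simp
  simp only [h2] at h
  unfold Imean
  simpa using h

lemma Imean_neg (μ : Measure S2) (F : Polynomial ℝ) : Imean μ (-F) = - Imean μ F := by
  unfold Imean; simp [integral_neg]

lemma Imean_sub (μ : Measure S2) [IsProbabilityMeasure μ] (F G : Polynomial ℝ) : Imean μ (F - G) = Imean μ F - Imean μ G := by
  rw [sub_eq_add_neg, Imean_add, Imean_neg]; ring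

lemma Imean_ibp {μ : Measure S2} [IsProbabilityMeasure μ] (hμ : InvM μ) (A B : Polynomial ℝ) :
    Imean μ (derivative A * B) = ((A * B).eval 1 - (A * B).eval (-1)) / 2 - Imean μ (A * derivative B) := by
  rw [← Imean_deriv hμ, derivative_mul, Imean_add]; ring

lemma Wd_root (N k : ℕ) (hk : k < N) : (derivative^[k] ((X^2 - 1 : Polynomial ℝ)^N)).eval 1 = 0 ∧
    (derivative^[k] ((X^2 - 1 : Polynomial ℝ)^N)).eval (-1) = 0 := by
  have h := Polynomial.pow_sub_dvd_iterate_derivative_of_pow_dvd k (dvd_refl ((X^2 - 1 : Polynomial ℝ)^N))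
  obtain ⟨q, hq⟩ := h
  rw [hq]
  constructor <;> simp [show N - k ≠ 0 by omega]

lemma Wd_orth {μ : Measure S2} [IsProbabilityMeasure μ] (hμ : InvM μ) (N k : ℕ) (hk : k ≤ N) (H : Polynomial ℝ) (hH : SmallC k H) :
    Imean μ (derivative^[k] ((X^2 - 1 : Polynomial ℝ)^N) * H) = 0 := by
  induction k generalizing H with
  | zero =>
    have : H = 0 := by ext j; simpa using hH j (Nat.zero_le _)
    simp [this, Imean]
  | succ k ih =>
    rw [Function.iterate_succ_apply', Imean_ibp hμ, ih (by omega)]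
    · obtain ⟨h1, h2⟩ := Wd_root N k (by omega)
      simp [h1, h2]
    · intro j hj
      rw [coeff_derivative, hH (j+1) (by omega), zero_mul]

lemma iter_deriv_eval (W : Polynomial ℝ) (k : ℕ) (a : ℝ) :
    (derivative^[k] W).eval a = (k.factorial : ℝ) * (taylor a W).coeff k := by
  rw [taylor_coeff, ← factorial_smul_hasseDeriv]
  simp

lemma taylor_W (N : ℕ) (e : ℝ) (he : e^2 = 1) : taylor e ((X^2 - 1 : Polynomial ℝ)^N) = X^N * (X + C (2*e))^N := by
  have hC : (C (2:ℝ) : Polynomial ℝ) = 2 := map_ofNat _ _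
  rw [taylor_pow, ← mul_pow]
  congr 1
  have : (C e : Polynomial ℝ)^2 = 1 := by rw [← C_pow, he, C_1]
  simp only [map_sub, taylor_pow, taylor_X, taylor_one, C_mul, hC, C_1]
  linear_combination this

lemma Imean_pos {μ : Measure S2} [IsProbabilityMeasure μ] (hμ : InvM μ) (Q : Polynomial ℝ)
    (h : Imean μ (Q * Q * (1 - X^2)) = 0) : Q = 0 := by
  haveI := openPos hμ
  have hc : Continuous (fun y : S2 => (Q * Q * (1 - X^2)).eval ((y:V) 2)) := by fun_prop
  have hz : (fun y : S2 => (Q * Q * (1 - X^2)).eval ((y:V) 2)) = 0 := by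
    refine (Continuous.ae_eq_iff_eq μ hc continuous_zero).1 ((integral_eq_zero_iff_of_nonneg ?_ (cint (μ := μ) hc)).1 h)
    intro y
    have := abs_le.1 (S2_coord_le y 2)
    simp
    apply mul_nonneg (mul_self_nonneg _)
    nlinarith
  by_contra hQ
  have hne : Q * Q * (1 - X^2) ≠ 0 := by
    apply mul_ne_zero (mul_ne_zero hQ hQ)
    intro h0
    have := congrArg (eval 0) h0
    simp at this
  apply hne
  apply Polynomial.eq_zero_of_infinite_isRoot
  refine Set.Infinite.mono (s := Set.Icc (0:ℝ) 1) ?_ (Set.Icc_infinite (by norm_num))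
  intro t ht
  have hs : Real.sqrt (1 - t^2) ^ 2 = 1 - t^2 := Real.sq_sqrt (by nlinarith [ht.1, ht.2])
  have hx : ⟪(!₂[Real.sqrt (1-t^2),0,t] : V), !₂[Real.sqrt (1-t^2),0,t]⟫ = 1 := by
    rw [V_inner]; simp; nlinarith
  have := congrFun hz ⟨!₂[Real.sqrt (1-t^2),0,t], by
    rw [mem_sphere_zero_iff_norm]
    rw [real_inner_self_eq_norm_sq] at hx
    exact (pow_eq_one_iff_of_nonneg (norm_nonneg _) two_ne_zero).1 hx⟩
  simpa using this

lemma LP_lead {μ : Measure S2} [IsProbabilityMeasure μ] (hμ : InvM μ) (m : ℕ) :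
    (LP μ m).coeff m = (-1)^m / ((m+1) * (m+2)) := by
  set N := m + 1 with hN
  set W : Polynomial ℝ := (X^2-1)^N with hW
  set P := derivative^[N] W with hP
  set F := derivative P with hF
  have hFi : F = derivative^[N+1] W := by rw [Function.iterate_succ_apply']
  have hFs : SmallC (m+1) F := by
    intro j hj
    have : W.natDegree ≤ N * 2 := by
      refine natDegree_pow_le.trans ?_
      gcongr
      compute_degree
    rw [hFi]
    apply coeff_eq_zero_of_natDegree_lt
    refine lt_of_le_of_lt (natDegree_iterate_derivative _ _) ?_
    omega
  have horth : ∀ G, SmallC m G → Imean μ (F * (G * (1 - X^2))) = 0 := by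
    intro G hG
    rw [Imean_ibp hμ, Wd_orth hμ N N le_rfl]
    · simp
    · intro j hj
      rw [coeff_derivative]
      have : (G * (1 - X^2)).coeff (j+1) = 0 := by
        rw [mul_sub, mul_one, coeff_sub, hG _ (by omega)]
        obtain ⟨i, rfl⟩ : ∃ i, j = i + 1 := ⟨j-1, by omega⟩
        rw [coeff_mul_X_pow, hG _ (by omega)]; simp
      rw [this, zero_mul]
  set l := (LP μ m).coeff m with hl
  have hQs : SmallC m (TP μ F - C l * F) := by
    obtain ⟨h1, h2⟩ := TP_small μ hFs
    intro j hj
    rw [coeff_sub, coeff_C_mul]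
    rcases eq_or_lt_of_le hj with rfl | hj'
    · rw [h2]; ring
    · rw [h1 j hj', hFs j hj']; ring
  have hTs : ∀ G, SmallC m G → SmallC m (TP μ G) := by
    intro G hG
    rcases m with _ | m
    · have : G = 0 := by ext j; simpa using hG j (Nat.zero_le _)
      rw [this, map_zero]; intro j _; simp
    · exact (TP_small μ hG).1
  have hQ0 : TP μ F - C l * F = 0 := by
    set Q := TP μ F - C l * F with hQ
    apply Imean_pos hμ
    have e1 : Q * Q * (1 - X^2) = TP μ F * Q * (1 - X^2) - C l * (F * (Q * (1 - X^2))) := by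
      rw [hQ]; ring
    rw [e1, Imean_sub, TP_sym hμ, Imean_C_mul, mul_assoc, horth _ (hTs _ hQs), horth _ hQs]
    ring
  have hev : l * F.eval 1 = - P.eval (-1) / 2 := by
    have h1 := TP_one hμ F
    rw [sub_eq_zero.1 hQ0, mul_comm (1 - X), Imean_ibp hμ] at h1
    have h2 : Imean μ (P * derivative (1 - X)) = 0 := by
      apply Wd_orth hμ N N le_rfl
      intro j hj
      rw [coeff_derivative]
      simp [coeff_X, coeff_one]
      omega
    rw [h2] at h1
    simp at h1
    rw [h1]
    ring
  have hF1 : F.eval 1 = ((N+1).factorial : ℝ) * (2^(N-1) * N) := by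
    rw [hFi, iter_deriv_eval, hW, taylor_W N 1 (by norm_num), add_comm N 1, coeff_X_pow_mul, coeff_X_add_C_pow]
    simp
  have hP1 : P.eval (-1) = (N.factorial : ℝ) * (-2)^N := by
    have := coeff_X_pow_mul ((X + C (2 * (-1:ℝ)))^N) N 0
    rw [zero_add] at this
    rw [hP, iter_deriv_eval, hW, taylor_W N (-1) (by norm_num), this, coeff_X_add_C_pow]
    simp
  rw [hF1, hP1, Nat.factorial_succ] at hev
  have hf : (N.factorial : ℝ) ≠ 0 := by positivity
  have h2 : (2:ℝ)^m ≠ 0 := by positivity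
  have h3 : (-2:ℝ)^N = 2 * (-1) * (2^m * (-1)^m) := by
    rw [hN, pow_succ, show (-2:ℝ) = 2 * (-1) by norm_num, mul_pow]; ring
  rw [h3] at hev
  have hm1 : (m:ℝ) + 1 ≠ 0 := by positivity
  have hm2 : (m:ℝ) + 2 ≠ 0 := by positivity
  rw [eq_div_iff (by positivity)]
  apply mul_left_cancel₀ (mul_ne_zero hf h2)
  rw [hN] at hev ⊢
  push_cast at hev ⊢
  linear_combination hev

end eig


section AbsSpec
variable {E ι : Type*} [NormedAddCommGroup E] [InnerProductSpace ℝ E] [CompleteSpace E]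
  {U : ι → Submodule ℝ E}

lemma abs_ext (hd : (⨆ i, U i)ᗮ = ⊥) (f : E →L[ℝ] ℝ) (h : ∀ i, ∀ u ∈ U i, f u = 0) (v : E) : f v = 0 := by
  have h1 : (⨆ i, U i) ≤ LinearMap.ker (f : E →ₗ[ℝ] ℝ) := iSup_le (fun i u hu => h i u hu)
  have h2 : (⨆ i, U i).topologicalClosure ≤ LinearMap.ker (f : E →ₗ[ℝ] ℝ) :=
    Submodule.topologicalClosure_minimal _ h1 f.isClosed_ker
  rw [(Submodule.topologicalClosure_eq_top_iff).mpr hd] at h2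
  exact h2 (Submodule.mem_top : v ∈ ⊤)

lemma abs_orth (hU : OrthogonalFamily ℝ (fun i => U i) (fun i => (U i).subtypeₗᵢ)) {i j : ι} (hij : i ≠ j)
    {u v : E} (hu : u ∈ U i) (hv : v ∈ U j) : ⟪u, v⟫ = 0 := hU hij ⟨u, hu⟩ ⟨v, hv⟩

lemma abs_coef (hU : OrthogonalFamily ℝ (fun i => U i) (fun i => (U i).subtypeₗᵢ)) (hd : (⨆ i, U i)ᗮ = ⊥)
    {A : E →L[ℝ] E} {α : ι → ℝ} (hA : ∀ i, ∀ u ∈ U i, A u = α i • u) (i : ι) (u : E) (hu : u ∈ U i) (v : E) :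
    ⟪u, A v⟫ = α i * ⟪u, v⟫ := by
  have := abs_ext hd ((innerSL ℝ u).comp A - α i • innerSL ℝ u) (fun j w hw => by
    simp only [ContinuousLinearMap.sub_apply, ContinuousLinearMap.comp_apply, ContinuousLinearMap.smul_apply, innerSL_apply_apply, hA j w hw,
      inner_smul_right, smul_eq_mul]
    by_cases hij : i = j
    · subst hij; ring
    · rw [abs_orth hU hij hu hw]; ring) v
  simp only [ContinuousLinearMap.sub_apply, ContinuousLinearMap.comp_apply, ContinuousLinearMap.smul_apply, innerSL_apply_apply, smul_eq_mul] at this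
  linarith

lemma abs_symm (hU : OrthogonalFamily ℝ (fun i => U i) (fun i => (U i).subtypeₗᵢ)) (hd : (⨆ i, U i)ᗮ = ⊥)
    {A : E →L[ℝ] E} {α : ι → ℝ} (hA : ∀ i, ∀ u ∈ U i, A u = α i • u) (f g : E) : ⟪A f, g⟫ = ⟪f, A g⟫ := by
  have := abs_ext hd ((innerSL ℝ g).comp A - innerSL ℝ (A g)) (fun j w hw => by
    simp only [ContinuousLinearMap.sub_apply, ContinuousLinearMap.comp_apply, innerSL_apply_apply]
    rw [real_inner_comm w (A g), abs_coef hU hd hA j w hw, hA j w hw, inner_smul_right, real_inner_comm w g]; ring) f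
  simp only [ContinuousLinearMap.sub_apply, ContinuousLinearMap.comp_apply, innerSL_apply_apply] at this
  rw [real_inner_comm, real_inner_comm (A g) f]; linarith

lemma absS_zero (hd : (⨆ i, U i)ᗮ = ⊥) (v : E) (h : ∀ i, ∀ u ∈ U i, ⟪v, u⟫ = 0) : v = 0 := by
  have := abs_ext hd (innerSL ℝ v) h v
  simpa using this

lemma abs_eig [DecidableEq ι] [∀ i, FiniteDimensional ℝ (U i)] (hU : OrthogonalFamily ℝ (fun i => U i) (fun i => (U i).subtypeₗᵢ)) (hd : (⨆ i, U i)ᗮ = ⊥)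
    {A : E →L[ℝ] E} {α : ι → ℝ} (hA : ∀ i, ∀ u ∈ U i, A u = α i • u) (ν : ℝ) (s : Finset ι) (hs : ∀ i, α i = ν ↔ i ∈ s) :
    Module.End.eigenspace (A : E →ₗ[ℝ] E) ν = ⨆ i ∈ s, U i := by
  apply le_antisymm
  · intro v hv
    have hv' : A v = ν • v := Module.End.mem_eigenspace_iff.mp hv
    have : v - ∑ i ∈ s, (U i).starProjection v = 0 := by
      apply absS_zero hd
      intro i u hu
      rw [inner_sub_left, sum_inner]
      have hproj : ∀ j, j ≠ i → ⟪(U j).starProjection v, u⟫ = 0 := fun j hj =>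
        abs_orth hU hj ((U j).starProjection_apply_mem v) hu
      have hii : ⟪(U i).starProjection v, u⟫ = ⟪v, u⟫ := by
        have := (U i).starProjection_inner_eq_zero v u hu
        rw [inner_sub_left] at this; linarith
      by_cases his : i ∈ s
      · rw [Finset.sum_eq_single_of_mem i his (fun j _ hj => hproj j hj), hii]; ring
      · rw [Finset.sum_eq_zero (fun j hj => hproj j (by rintro rfl; exact his hj))]
        have h1 := abs_coef hU hd hA i u hu v
        rw [hv', inner_smul_right] at h1
        have h2 : α i ≠ ν := fun h => his ((hs i).mp h)
        have h3 : (α i - ν) * ⟪u, v⟫ = 0 := by linear_combination -h1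
        rcases mul_eq_zero.mp h3 with h | h
        · exact absurd (sub_eq_zero.mp h) h2
        · rw [real_inner_comm, h]; ring
    rw [sub_eq_zero.mp this]
    exact Submodule.sum_mem _ (fun i hi => Submodule.mem_iSup_of_mem i (Submodule.mem_iSup_of_mem hi ((U i).starProjection_apply_mem v)))
  · refine iSup_le fun i => iSup_le fun hi => ?_
    intro u hu
    rw [Module.End.mem_eigenspace_iff]
    have := hA i u hu
    rw [(hs i).mpr hi] at this
    exact this

lemma abs_bound (hU : OrthogonalFamily ℝ (fun i => U i) (fun i => (U i).subtypeₗᵢ)) (hd : (⨆ i, U i)ᗮ = ⊥)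
    {A : E →L[ℝ] E} {α : ι → ℝ} (hA : ∀ i, ∀ u ∈ U i, A u = α i • u) (ε : ℝ) (hε : 0 ≤ ε) (h : ∀ i, |α i| ≤ ε) : ‖A‖ ≤ ε := by
  classical
  apply ContinuousLinearMap.opNorm_le_bound _ hε
  intro v
  have hcl : IsClosed {v : E | ‖A v‖ ≤ ε * ‖v‖} := isClosed_le (by fun_prop) (by fun_prop)
  have hsub : ((⨆ i, U i : Submodule ℝ E) : Set E) ⊆ {v : E | ‖A v‖ ≤ ε * ‖v‖} := by
    intro w hw
    rw [SetLike.mem_coe, Submodule.mem_iSup_iff_exists_finsupp] at hw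
    obtain ⟨f, hf, rfl⟩ := hw
    rw [Set.mem_setOf_eq, Finsupp.sum, map_sum]
    have e1 := hU.norm_sum (fun i => ⟨f i, hf i⟩) f.support
    have e2 := hU.norm_sum (fun i => α i • ⟨f i, hf i⟩) f.support
    simp only [Submodule.coe_norm, Submodule.coe_smul] at e1 e2
    change ‖∑ i ∈ f.support, f i‖^2 = _ at e1
    change ‖∑ i ∈ f.support, α i • f i‖^2 = _ at e2
    rw [Finset.sum_congr rfl (fun i _ => hA i (f i) (hf i))]
    rw [← sq_le_sq₀ (norm_nonneg _) (by positivity), mul_pow, e1, e2, Finset.mul_sum]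
    apply Finset.sum_le_sum
    intro i _
    rw [norm_smul, mul_pow]
    have : ‖α i‖^2 ≤ ε^2 := by
      rw [sq_le_sq₀ (norm_nonneg _) hε]; exact h i
    gcongr
  have h3 : closure ((⨆ i, U i : Submodule ℝ E) : Set E) ⊆ {v : E | ‖A v‖ ≤ ε * ‖v‖} := closure_minimal hsub hcl
  rw [← Submodule.topologicalClosure_coe, (Submodule.topologicalClosure_eq_top_iff).mpr hd] at h3
  exact h3 (Submodule.mem_top : v ∈ (⊤ : Submodule ℝ E))

lemma abs_compact [DecidableEq ι] [∀ i, FiniteDimensional ℝ (U i)] (hU : OrthogonalFamily ℝ (fun i => U i) (fun i => (U i).subtypeₗᵢ)) (hd : (⨆ i, U i)ᗮ = ⊥)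
    {A : E →L[ℝ] E} {α : ι → ℝ} (hA : ∀ i, ∀ u ∈ U i, A u = α i • u) (hα : Filter.Tendsto α Filter.cofinite (nhds 0)) :
    IsCompactOperator A := by
  let AF : Finset ι → (E →L[ℝ] E) := fun F => ∑ i ∈ F, A.comp (U i).starProjection
  have hAF : ∀ F, IsCompactOperator (AF F) := by
    intro F
    induction F using Finset.induction_on with
    | empty => simp only [AF, Finset.sum_empty]; exact isCompactOperator_zero
    | insert a s ha ih =>
      have : AF (insert a s) = A.comp (U a).starProjection + AF s := by simp [AF, Finset.sum_insert ha]
      rw [this]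
      refine IsCompactOperator.add (f := A.comp (U a).starProjection) (g := AF s) ?_ ih
      refine IsCompactOperator.clm_comp ?_ A
      have h2 : IsCompactOperator ((U a).subtypeL) := by
        haveI : ProperSpace (U a) := FiniteDimensional.proper ℝ (U a)
        exact isCompactOperator_of_locallyCompactSpace_rng (U a).subtypeL
      exact h2.comp_clm ((U a).orthogonalProjection)
  refine isCompactOperator_of_tendsto (F := AF) (l := Filter.atTop) ?_ (Filter.Eventually.of_forall hAF)
  rw [Metric.tendsto_atTop]
  intro ε hε
  have hfin : {i | ¬ |α i| < ε / 2}.Finite := by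
    have := (Metric.tendsto_nhds.mp hα) (ε/2) (by positivity)
    rw [Filter.eventually_cofinite] at this
    simpa using this
  refine ⟨hfin.toFinset, fun F hF => ?_⟩
  rw [dist_comm, dist_eq_norm]
  have := abs_bound hU hd (A := A - AF F) (α := fun i => if i ∈ F then 0 else α i) ?_ (ε/2) (by positivity) ?_
  · linarith
  · intro i u hu
    have key : ∀ j, A.comp (U j).starProjection u = if j = i then A u else 0 := by
      intro j
      split_ifs with hj
      · subst hj
        simp [Submodule.starProjection_eq_self_iff.mpr hu]
      · have : (U j).starProjection u = 0 := by
          rw [Submodule.starProjection_apply_eq_zero_iff]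
          intro w hw
          exact abs_orth hU hj hw hu
        simp [this]
    simp only [AF, ContinuousLinearMap.sub_apply, ContinuousLinearMap.sum_apply, key, Finset.sum_ite_eq']
    split_ifs <;> simp [hA i u hu]
  · intro i
    split_ifs with hi
    · simp; positivity
    · by_contra hc
      apply hi
      apply hF
      simp only [Set.Finite.mem_toFinset, Set.mem_setOf_eq]
      intro h; exact hc h.le

end AbsSpec


/-- continuous tangent fields -/
def TanC : Submodule ℝ C(S2, V) where
  carrier := {F | Tan F}
  add_mem' := by
    intro f g hf hg y
    simp [inner_add_right, hf y, hg y]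
  zero_mem' := by intro y; simp
  smul_mem' := by
    intro c f hf y
    simp [inner_smul_right, hf y]

def toHl (μ : Measure S2) [IsProbabilityMeasure μ] : TanC →ₗ[ℝ] Hsub μ :=
  LinearMap.codRestrict (Hsub μ) ((ContinuousMap.toLp (E := V) 2 μ ℝ : C(S2,V) →L[ℝ] Lp V 2 μ).toLinearMap ∘ₗ TanC.subtype) (by
    intro F
    change ∀ᵐ x ∂μ, _ ∈ plane x
    filter_upwards [ContinuousMap.coeFn_toLp (p := 2) (𝕜 := ℝ) μ (F : C(S2,V))] with x hx
    rw [mem_plane]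
    simp only [LinearMap.comp_apply, Submodule.subtype_apply, ContinuousLinearMap.coe_coe]
    rw [hx]
    exact F.2 x)

section
variable {μ : Measure S2} [IsProbabilityMeasure μ]

lemma toHl_coe (F : TanC) : (((toHl μ F : Hsub μ) : Lp V 2 μ) : S2 → V) =ᵐ[μ] (F : C(S2,V)) :=
  ContinuousMap.coeFn_toLp (p := 2) (𝕜 := ℝ) μ (F : C(S2,V))

lemma Hl_inner (f g : Hsub μ) : ⟪f, g⟫ = ∫ x, ⟪((f : Lp V 2 μ) : S2 → V) x, ((g : Lp V 2 μ) : S2 → V) x⟫ ∂μ := by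
  rw [Submodule.coe_inner, MeasureTheory.L2.inner_def]

lemma toHl_inner (F G : TanC) : ⟪toHl μ F, toHl μ G⟫ = ∫ x, ⟪(F : C(S2,V)) x, (G : C(S2,V)) x⟫ ∂μ := by
  rw [Hl_inner]
  apply integral_congr_ae
  filter_upwards [toHl_coe (μ := μ) F, toHl_coe (μ := μ) G] with x h1 h2
  rw [h1, h2]

lemma toHl_inj (hμ : InvM μ) : Function.Injective (toHl μ) := by
  haveI := openPos hμ
  intro F G h
  have h1 : ContinuousMap.toLp (E := V) 2 μ ℝ (F : C(S2,V)) = ContinuousMap.toLp (E := V) 2 μ ℝ (G : C(S2,V)) := congrArg Subtype.val h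
  exact Subtype.ext (ContinuousMap.toLp_injective μ h1)

lemma Hl_ext {f g : Hsub μ} (h : ((f : Lp V 2 μ) : S2 → V) =ᵐ[μ] ((g : Lp V 2 μ) : S2 → V)) : f = g :=
  Subtype.ext (Lp.ext h)

/-- rotation by a right angle in each tangent plane -/
def JT : TanC →ₗ[ℝ] TanC where
  toFun F := ⟨⟨fun x => crossV x ((F : C(S2,V)) x), by fun_prop⟩, by
    intro y; simp [V_inner]; ring⟩
  map_add' F G := by
    ext1; ext1 x
    change crossV x ((F:C(S2,V)) x + (G:C(S2,V)) x) = crossV x ((F:C(S2,V)) x) + crossV x ((G:C(S2,V)) x)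
    rw [← crossL_apply, map_add]; rfl
  map_smul' c F := by
    ext1; ext1 x
    change crossV x (c • (F:C(S2,V)) x) = c • crossV x ((F:C(S2,V)) x)
    rw [← crossL_apply, map_smul]; rfl

def Jp (β : Bool) : TanC →ₗ[ℝ] TanC := if β then JT else LinearMap.id

def ZT (F : Polynomial ℝ) (b : V) : TanC := ⟨⟨Zf F b, Zf_cont F b⟩, Zf_tan F b⟩

lemma ZT_apply (F : Polynomial ℝ) (b : V) (x : S2) : (ZT F b : C(S2,V)) x = Zf F b x := rfl
lemma JT_apply (F : TanC) (x : S2) : (JT F : C(S2,V)) x = crossV x ((F : C(S2,V)) x) := rfl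

lemma ZT_add (F G : Polynomial ℝ) (b : V) : ZT (F + G) b = ZT F b + ZT G b := by
  ext1; ext1 x; exact Zf_add F G b x

lemma ZT_smul (c : ℝ) (F : Polynomial ℝ) (b : V) : ZT (c • F) b = c • ZT F b := by
  ext1; ext1 x; exact Zf_smul c F b x

lemma Tker_ae (hμ : InvM μ) (F : TanC) (x : S2) :
    ∫ y, Tker x y ((((toHl μ F : Hsub μ) : Lp V 2 μ) : S2 → V) y) ∂μ = Tint μ (F : C(S2,V)) x := by
  unfold Tint
  apply integral_congr_ae
  filter_upwards [toHl_coe (μ := μ) F, measure_poles hμ x] with y h1 h2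
  rw [h1, Tker_eq x y _ (mem_plane.mpr (F.2 y)) h2, tk]

lemma continuous_negS : Continuous negS := by
  unfold negS; fun_prop

lemma negS_mp (hμ : InvM μ) : MeasurePreserving negS μ μ := by
  have := hμ (LinearIsometryEquiv.neg ℝ)
  have e : negS = sphereMap (LinearIsometryEquiv.neg ℝ) := by
    ext1 x; ext1; simp [negS, sphereMap]
  rw [e]; exact this

def negHomeo : S2 ≃ₜ S2 where
  toFun := negS
  invFun := negS
  left_inv x := by ext1; simp [negS]
  right_inv x := by ext1; simp [negS]
  continuous_toFun := continuous_negS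
  continuous_invFun := continuous_negS

lemma integral_negS {E : Type*} [NormedAddCommGroup E] [NormedSpace ℝ E] (hμ : InvM μ) (G : S2 → E) :
    ∫ x, G (negS x) ∂μ = ∫ x, G x ∂μ :=
  (negS_mp hμ).integral_comp negHomeo.measurableEmbedding G

lemma negS_coe (x : S2) : (negS x : V) = -(x:V) := rfl

lemma tk_neg (x y : S2) (v : V) : tk x (negS y) v = tk (negS x) y v - (2 * ⟪(x:V), v⟫ / (1 - ⟪(x:V),(y:V)⟫)) • ((x:V) - y) - (2 * ⟪(x:V), v⟫ / (1 - ⟪(x:V),(y:V)⟫)) • ((y:V) - x) := by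
  unfold tk
  simp only [negS_coe, inner_neg_left, inner_neg_right, sub_eq_add_neg, neg_div]
  module

def Oint (μ : Measure S2) (F : S2 → V) (x : S2) : V := (1/2 : ℝ) • (Tint μ F (negS x) - Tint μ F x)

lemma Oker_ae (hμ : InvM μ) (F : TanC) (x : S2) :
    ∫ y, Oker x y ((((toHl μ F : Hsub μ) : Lp V 2 μ) : S2 → V) y) ∂μ = Oint μ (F : C(S2,V)) x := by
  unfold Oint Tint
  rw [← integral_sub (tk_int (F : C(S2,V)).continuous F.2 _) (tk_int (F : C(S2,V)).continuous F.2 _), ← integral_smul]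
  apply integral_congr_ae
  filter_upwards [toHl_coe (μ := μ) F, measure_poles hμ x] with y h1 h2
  rw [h1, Oker_eq x y _ (mem_plane.mpr (F.2 y)), tk, tk]
  simp only [negS_coe, inner_neg_left]
  have e1 : 1 + ⟪(x:V),(y:V)⟫ ≠ 0 := fun h => h2 (by linear_combination (1 - ⟪(x:V),(y:V)⟫) * h)
  have e2 : 1 - ⟪(x:V),(y:V)⟫ ≠ 0 := fun h => h2 (by linear_combination (1 + ⟪(x:V),(y:V)⟫) * h)
  have e3 : 1 + - ⟪(x:V),(y:V)⟫ ≠ 0 := by rwa [← sub_eq_add_neg]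
  generalize ⟪(x:V),(y:V)⟫ = t at *
  generalize ⟪(x:V), (F:C(S2,V)) y⟫ = s at *
  match_scalars <;> field_simp <;> ring

lemma Tint_negsym (hμ : InvM μ) {F G : S2 → V} (hF : Continuous F) (hTF : Tan F)
    (hG : Continuous G) (hTG : Tan G) : ∫ x, ⟪Tint μ F (negS x), G x⟫ ∂μ = ∫ x, ⟪F x, Tint μ G (negS x)⟫ ∂μ := by
  have h1 := integral_negS hμ (fun x => ⟪Tint μ F x, G (negS x)⟫)
  have e : ∀ x, negS (negS x) = x := fun x => negHomeo.left_inv x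
  simp only [e] at h1
  rw [h1, Tint_sym (G := fun x => G (negS x)) hF hTF (hG.comp continuous_negS) (by
    intro y; have := hTG (negS y); rw [negS_coe, inner_neg_left] at this; simpa using this)]
  congr 1; ext x; congr 1
  unfold Tint
  rw [← integral_negS hμ]
  congr 1; ext1 y
  rw [tk_neg]; simp only [e]
  module

lemma Tint_bdd {F : S2 → V} (hF : Continuous F) (hTF : Tan F) : ∃ C, ∀ x, ‖Tint μ F x‖ ≤ C := by
  obtain ⟨C, hC⟩ := Tan_bdd hF
  refine ⟨C, fun x => ?_⟩
  have := norm_integral_le_of_norm_le_const (μ := μ) (f := fun y => tk x y (F y)) (C := C)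
    (Filter.Eventually.of_forall fun y => by rw [norm_tk x y _ (hTF y)]; exact hC y)
  simpa [Tint] using this

lemma Tint_meas {F : S2 → V} (hF : Continuous F) : Measurable (Tint μ F) := by
  apply StronglyMeasurable.measurable
  unfold Tint
  have : StronglyMeasurable (Function.uncurry fun x y => tk x y (F y)) := by
    apply Measurable.stronglyMeasurable
    exact tk_meas.comp (f := fun p : S2 × S2 => (p, F p.2)) (by fun_prop)
  exact this.integral_prod_right

lemma Tint_integrable {F G : S2 → V} (hF : Continuous F) (hTF : Tan F) (hG : Continuous G) {f : S2 → S2} (hf : Continuous f) :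
    Integrable (fun x => ⟪Tint μ F (f x), G x⟫) μ := by
  obtain ⟨C, hC⟩ := Tint_bdd (μ := μ) hF hTF
  obtain ⟨D, hD⟩ := Tan_bdd hG
  apply Integrable.of_bound (C := C * D)
  · have := Tint_meas (μ := μ) hF
    exact ((this.comp hf.measurable).inner hG.measurable).aestronglyMeasurable
  · refine Filter.Eventually.of_forall fun x => (norm_inner_le_norm _ _).trans ?_
    have := hC (f x)
    have := hD x
    gcongr
    exact (norm_nonneg _).trans (hC (f x))

lemma Oint_sym (hμ : InvM μ) {F G : S2 → V} (hF : Continuous F) (hTF : Tan F)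
    (hG : Continuous G) (hTG : Tan G) : ∫ x, ⟪Oint μ F x, G x⟫ ∂μ = ∫ x, ⟪F x, Oint μ G x⟫ ∂μ := by
  have i1 := Tint_integrable (μ := μ) hF hTF hG continuous_negS
  have i2 := Tint_integrable (μ := μ) hF hTF hG continuous_id
  have i3 := Tint_integrable (μ := μ) hG hTG hF continuous_negS
  have i4 := Tint_integrable (μ := μ) hG hTG hF continuous_id
  unfold Oint
  simp only [id] at i2 i4
  simp only [real_inner_comm (F _)] at i3 i4
  simp only [inner_smul_left, inner_smul_right, inner_sub_left, inner_sub_right]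
  rw [integral_const_mul, integral_const_mul, integral_sub i1 i2, integral_sub i3 i4, Tint_negsym hμ hF hTF hG hTG, Tint_sym hF hTF hG hTG]
  simp
end


section
variable {μ : Measure S2} [IsProbabilityMeasure μ]

def sgB (β : Bool) : ℝ := if β then -1 else 1

structure Act (A : Hsub μ →L[ℝ] Hsub μ) (P : Bool → Polynomial ℝ → Polynomial ℝ) (α : Bool → ℕ → ℝ) : Prop where
  act : ∀ β b F, ⟪b,b⟫ = (1:ℝ) → A (toHl μ (Jp β (ZT F b))) = toHl μ (Jp β (ZT (P β F) b))
  deg : ∀ β m F, SmallC (m+1) F → SmallC (m+1) (P β F) ∧ (P β F).coeff m = α β m * F.coeff m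
  sym : ∀ F G : TanC, ⟪A (toHl μ F), toHl μ G⟫ = ⟪toHl μ F, A (toHl μ G)⟫

lemma Tint_Jp (hμ : InvM μ) (β : Bool) (b : V) (hb : ⟪b,b⟫ = (1:ℝ)) (F : Polynomial ℝ) (x : S2) :
    Tint μ (Jp β (ZT F b) : C(S2,V)) x = (Jp β (ZT (TP μ F) b) : C(S2,V)) x := by
  cases β
  · exact Tint_Zf hμ F b hb x
  · simp only [Jp, if_true]
    rw [JT_apply, ZT_apply, ← Tint_Zf hμ F b hb x]
    exact Tint_cross hμ (Zf_cont F b) (Zf_tan F b) x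

lemma Act_T (hμ : InvM μ) (A : Hsub μ →L[ℝ] Hsub μ)
    (hT : ∀ s : Hsub μ, ∀ᵐ x ∂μ,
      ((A s : Lp V 2 μ) : S2 → V) x = ∫ y, Tker x y (((s : Lp V 2 μ) : S2 → V) y) ∂μ) :
    Act A (fun _ => TP μ) (fun _ m => (-1)^m / ((m+1) * (m+2))) where
  act β b F hb := by
    apply Hl_ext
    filter_upwards [hT (toHl μ (Jp β (ZT F b))), toHl_coe (μ := μ) (Jp β (ZT (TP μ F) b))] with x h1 h2
    rw [h1, h2, Tker_ae hμ, Tint_Jp hμ β b hb]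
  deg β m F hF := by
    have := TP_small μ hF
    refine ⟨this.1, ?_⟩
    rw [this.2, LP_lead hμ]; ring
  sym F G := by
    rw [Hl_inner, Hl_inner]
    have e1 : ∫ x, ⟪((A (toHl μ F) : Lp V 2 μ) : S2 → V) x, ((toHl μ G : Lp V 2 μ) : S2 → V) x⟫ ∂μ = ∫ x, ⟪Tint μ (F : C(S2,V)) x, (G : C(S2,V)) x⟫ ∂μ := by
      apply integral_congr_ae
      filter_upwards [hT (toHl μ F), toHl_coe (μ := μ) G] with x h1 h2
      rw [h1, h2, Tker_ae hμ]
    have e2 : ∫ x, ⟪((toHl μ F : Lp V 2 μ) : S2 → V) x, ((A (toHl μ G) : Lp V 2 μ) : S2 → V) x⟫ ∂μ = ∫ x, ⟪(F : C(S2,V)) x, Tint μ (G : C(S2,V)) x⟫ ∂μ := by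
      apply integral_congr_ae
      filter_upwards [hT (toHl μ G), toHl_coe (μ := μ) F] with x h1 h2
      rw [h1, h2, Tker_ae hμ]
    rw [e1, e2]
    exact Tint_sym (F : C(S2,V)).continuous F.2 (G : C(S2,V)).continuous G.2

def OP (μ : Measure S2) (β : Bool) (F : Polynomial ℝ) : Polynomial ℝ :=
  (1/2 : ℝ) • (sgB β • (TP μ F).comp (-Polynomial.X) - TP μ F)

lemma ZT_comp_neg (F : Polynomial ℝ) (b : V) (x : S2) : Zf (F.comp (-Polynomial.X)) b x = Zf F b (negS x) := by
  simp [Zf, negS_coe]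

lemma coeff_comp_neg (F : Polynomial ℝ) (m : ℕ) : (F.comp (-Polynomial.X)).coeff m = (-1)^m * F.coeff m := by
  have h : (-Polynomial.X : Polynomial ℝ) = Polynomial.C (-1) * Polynomial.X := by simp
  rw [h, Polynomial.comp_C_mul_X_coeff]; ring

lemma Jp_neg (β : Bool) (F : Polynomial ℝ) (b : V) (x : S2) :
    (Jp β (ZT F b) : C(S2,V)) (negS x) = sgB β • (Jp β (ZT (F.comp (-Polynomial.X)) b) : C(S2,V)) x := by
  cases β
  · simp only [Jp, sgB]; simp [ZT_apply, ZT_comp_neg]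
  · simp only [Jp, sgB, if_true, JT_apply, ZT_apply, ZT_comp_neg, negS_coe]
    apply V_ext <;> simp <;> ring

lemma Act_O (hμ : InvM μ) (A : Hsub μ →L[ℝ] Hsub μ)
    (hO : ∀ s : Hsub μ, ∀ᵐ x ∂μ,
      ((A s : Lp V 2 μ) : S2 → V) x = ∫ y, Oker x y (((s : Lp V 2 μ) : S2 → V) y) ∂μ) :
    Act A (OP μ) (fun β m => (1/2) * (sgB β * (-1)^m - 1) * ((-1)^m / ((m+1) * (m+2)))) where
  act β b F hb := by
    apply Hl_ext
    filter_upwards [hO (toHl μ (Jp β (ZT F b))), toHl_coe (μ := μ) (Jp β (ZT (OP μ β F) b))] with x h1 h2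
    rw [h1, h2, Oker_ae hμ, Oint, Tint_Jp hμ β b hb, Tint_Jp hμ β b hb, Jp_neg, OP, sub_eq_add_neg (sgB β • _) (TP μ F), ← neg_one_smul ℝ (TP μ F),
      ZT_smul, ZT_add, ZT_smul, ZT_smul]
    simp only [map_smul, map_add, Submodule.coe_smul, Submodule.coe_add, ContinuousMap.smul_apply, ContinuousMap.add_apply]
    module
  deg β m F hF := by
    have := TP_small μ hF
    have h1 := this.1
    refine ⟨fun j hj => ?_, ?_⟩
    · simp [OP, coeff_comp_neg, h1 j hj]
    · simp only [OP, Polynomial.coeff_smul, Polynomial.coeff_sub, coeff_comp_neg, smul_eq_mul]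
      rw [this.2, LP_lead hμ]; ring
  sym F G := by
    rw [Hl_inner, Hl_inner]
    have e1 : ∫ x, ⟪((A (toHl μ F) : Lp V 2 μ) : S2 → V) x, ((toHl μ G : Lp V 2 μ) : S2 → V) x⟫ ∂μ = ∫ x, ⟪Oint μ (F : C(S2,V)) x, (G : C(S2,V)) x⟫ ∂μ := by
      apply integral_congr_ae
      filter_upwards [hO (toHl μ F), toHl_coe (μ := μ) G] with x h1 h2
      rw [h1, h2, Oker_ae hμ]
    have e2 : ∫ x, ⟪((toHl μ F : Lp V 2 μ) : S2 → V) x, ((A (toHl μ G) : Lp V 2 μ) : S2 → V) x⟫ ∂μ = ∫ x, ⟪(F : C(S2,V)) x, Oint μ (G : C(S2,V)) x⟫ ∂μ := by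
      apply integral_congr_ae
      filter_upwards [hO (toHl μ G), toHl_coe (μ := μ) F] with x h1 h2
      rw [h1, h2, Oker_ae hμ]
    rw [e1, e2]
    exact Oint_sym hμ (F : C(S2,V)).continuous F.2 (G : C(S2,V)).continuous G.2
end


section
variable {μ : Measure S2} [IsProbabilityMeasure μ]

lemma aux_sub_smul {E : Type*} [NormedAddCommGroup E] [InnerProductSpace ℝ E] (a f g : E) (c : ℝ) :
    ⟪a - c • f, g⟫ = ⟪a, g⟫ - c * ⟪f, g⟫ := by rw [inner_sub_left, real_inner_smul_left]

def zf (μ : Measure S2) [IsProbabilityMeasure μ] (β : Bool) (F : Polynomial ℝ) (b : V) : Hsub μ := toHl μ (Jp β (ZT F b))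

lemma zf_add (β : Bool) (F G : Polynomial ℝ) (b : V) : zf μ β (F + G) b = zf μ β F b + zf μ β G b := by
  simp [zf, ZT_add]

lemma zf_smul (β : Bool) (c : ℝ) (F : Polynomial ℝ) (b : V) : zf μ β (c • F) b = c • zf μ β F b := by
  simp [zf, ZT_smul]

def GG (μ : Measure S2) [IsProbabilityMeasure μ] (β : Bool) (n : ℕ) : Submodule ℝ (Hsub μ) :=
  Submodule.span ℝ {f | ∃ k b, k < n ∧ ⟪b,b⟫ = (1:ℝ) ∧ f = zf μ β (Polynomial.X^k) b}

lemma GG_mono (β : Bool) {m n : ℕ} (h : m ≤ n) : GG μ β m ≤ GG μ β n := by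
  apply Submodule.span_mono
  rintro f ⟨k, b, hk, hb, rfl⟩
  exact ⟨k, b, by omega, hb, rfl⟩

lemma zf_mem (β : Bool) (n : ℕ) (F : Polynomial ℝ) (hF : SmallC n F) (b : V) (hb : ⟪b,b⟫ = (1:ℝ)) : zf μ β F b ∈ GG μ β n := by
  let zl : Polynomial ℝ →ₗ[ℝ] Hsub μ := { toFun := fun F => zf μ β F b, map_add' := fun F G => zf_add β F G b, map_smul' := fun c F => zf_smul β c F b }
  change zl F ∈ _
  rw [F.as_sum_support_C_mul_X_pow, map_sum]
  refine Submodule.sum_mem _ fun k hk => ?_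
  rw [← Polynomial.smul_eq_C_mul, map_smul]
  refine Submodule.smul_mem _ _ (Submodule.subset_span ⟨k, b, ?_, hb, rfl⟩)
  by_contra h
  exact (Polynomial.mem_support_iff.mp hk) (hF k (by omega))

def UU (μ : Measure S2) [IsProbabilityMeasure μ] (β : Bool) (m : ℕ) : Submodule ℝ (Hsub μ) := GG μ β (m+1) ⊓ (GG μ β m)ᗮ

lemma GG_act {A : Hsub μ →L[ℝ] Hsub μ} {P : Bool → Polynomial ℝ → Polynomial ℝ} {α : Bool → ℕ → ℝ} (h : Act A P α)
    (β : Bool) (m : ℕ) (f : Hsub μ) (hf : f ∈ GG μ β (m+1)) : A f - α β m • f ∈ GG μ β m := by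
  induction hf using Submodule.span_induction with
  | mem f hf =>
    obtain ⟨k, b, hk, hb, rfl⟩ := hf
    have hS : SmallC (m+1) (Polynomial.X^k : Polynomial ℝ) := by
      intro j hj; rw [Polynomial.coeff_X_pow, if_neg (by omega)]
    have e : A (zf μ β (Polynomial.X^k) b) - α β m • zf μ β (Polynomial.X^k) b = zf μ β (P β (Polynomial.X^k) + (-α β m) • Polynomial.X^k) b := by
      rw [zf_add, zf_smul, zf, h.act β b _ hb, zf]; module
    rw [e]
    apply zf_mem _ _ _ _ _ hb
    intro j hj
    have := h.deg β m _ hS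
    rcases hj.eq_or_lt with rfl | hj
    · rw [Polynomial.coeff_add, this.2, Polynomial.coeff_smul, smul_eq_mul]; ring
    · rw [Polynomial.coeff_add, this.1 j hj, Polynomial.coeff_smul, hS j hj]; simp
  | zero => simp
  | add f g _ _ hf hg =>
    have : A (f + g) - α β m • (f + g) = (A f - α β m • f) + (A g - α β m • g) := by rw [map_add]; module
    rw [this]; exact add_mem hf hg
  | smul c f _ hf =>
    have : A (c • f) - α β m • (c • f) = c • (A f - α β m • f) := by rw [map_smul]; module
    rw [this]; exact smul_mem _ _ hf

lemma GG_range (β : Bool) (n : ℕ) (f : Hsub μ) (hf : f ∈ GG μ β n) : ∃ F : TanC, toHl μ F = f := by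
  have : GG μ β n ≤ LinearMap.range (toHl μ) := by
    apply Submodule.span_le.mpr
    rintro f ⟨k, b, hk, hb, rfl⟩
    exact ⟨_, rfl⟩
  exact this hf

lemma UU_eig {A : Hsub μ →L[ℝ] Hsub μ} {P : Bool → Polynomial ℝ → Polynomial ℝ} {α : Bool → ℕ → ℝ} (h : Act A P α)
    (β : Bool) (m : ℕ) (f : Hsub μ) (hf : f ∈ UU μ β m) : A f = α β m • f := by
  obtain ⟨h1, h2⟩ := hf
  have hg := GG_act h β m f h1
  set g := A f - α β m • f with hgdef
  have hAg : A g ∈ GG μ β m := by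
    cases m with
    | zero =>
      have : g = 0 := by
        have : GG μ β 0 = ⊥ := by
          rw [GG, Submodule.span_eq_bot]; rintro f ⟨k, b, hk, _⟩; omega
        rwa [this, Submodule.mem_bot] at hg
      rw [this, map_zero]; exact zero_mem _
    | succ m =>
      have h3 := GG_act h β m g hg
      have : A g = (A g - α β m • g) + α β m • g := by module
      rw [this]
      exact add_mem (GG_mono β (Nat.le_succ m) h3) (smul_mem _ _ hg)
  have hgg : ⟪g, g⟫ = 0 := by
    have e1 : ⟪A f, g⟫ = ⟪f, A g⟫ := by
      obtain ⟨F, rfl⟩ := GG_range _ _ _ h1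
      obtain ⟨G, hG⟩ := GG_range _ _ _ hg
      rw [← hG]; exact h.sym F G
    have e2 : ⟪f, A g⟫ = 0 := by rw [real_inner_comm]; exact h2 _ hAg
    have e3 : ⟪f, g⟫ = 0 := by rw [real_inner_comm]; exact h2 _ hg
    calc ⟪g, g⟫ = ⟪A f, g⟫ - α β m * ⟪f, g⟫ := by
          exact aux_sub_smul (A f) f g (α β m)
      _ = 0 := by rw [e1, e2, e3]; ring
  exact sub_eq_zero.mp (inner_self_eq_zero.mp hgg)

lemma triple (a b c : V) : ⟪a, crossV b c⟫ = ⟪b, crossV c a⟫ := by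
  simp [V_inner]; ring

lemma cross_orth1 (a b : V) : ⟪crossV a b, a⟫ = 0 := by simp [V_inner]; ring
lemma cross_orth2 (a b : V) : ⟪crossV a b, b⟫ = 0 := by simp [V_inner]; ring

lemma grad_curl_int (hμ : InvM μ) (j k : ℕ) (b c : V) :
    ∫ y : S2, ⟪b,(y:V)⟫^j * ⟪c,(y:V)⟫^k * ⟪crossV c b, (y:V)⟫ ∂μ = 0 := by
  set n := crossV c b with hn
  set g := (ℝ ∙ n)ᗮ.reflection with hg
  have h1 := integral_sphereMap hμ g (fun y : S2 => ⟪b,(y:V)⟫^j * ⟪c,(y:V)⟫^k * ⟪n, (y:V)⟫)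
  have gn : g n = -n := Submodule.reflection_orthogonalComplement_singleton_eq_neg n
  have gb : g b = b := by
    apply Submodule.reflection_mem_subspace_eq_self
    rw [Submodule.mem_orthogonal_singleton_iff_inner_right]; exact cross_orth2 c b
  have gc : g c = c := by
    apply Submodule.reflection_mem_subspace_eq_self
    rw [Submodule.mem_orthogonal_singleton_iff_inner_right]; exact cross_orth1 c b
  have e1 : ∀ y : S2, ⟪b, (sphereMap g y : V)⟫ = ⟪b,(y:V)⟫ := by
    intro y; change ⟪b, g y⟫ = _; nth_rewrite 1 [← gb]; exact g.inner_map_map _ _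
  have e2 : ∀ y : S2, ⟪c, (sphereMap g y : V)⟫ = ⟪c,(y:V)⟫ := by
    intro y; change ⟪c, g y⟫ = _; nth_rewrite 1 [← gc]; exact g.inner_map_map _ _
  have e3 : ∀ y : S2, ⟪n, (sphereMap g y : V)⟫ = -⟪n,(y:V)⟫ := by
    intro y; change ⟪n, g y⟫ = _
    have : ⟪g n, g y⟫ = ⟪n, (y:V)⟫ := g.inner_map_map _ _
    rw [gn, inner_neg_left] at this; linarith
  simp only [e1, e2, e3, mul_neg, integral_neg] at h1
  linarith

lemma grad_curl (hμ : InvM μ) (m n : ℕ) : GG μ false m ≤ (GG μ true n)ᗮ := by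
  apply Submodule.span_le.mpr
  rintro f ⟨k, b, hk, hb, rfl⟩
  rw [SetLike.mem_coe, Submodule.mem_orthogonal']
  intro u hu
  have : GG μ true n ≤ LinearMap.ker (innerSL ℝ (zf μ false (Polynomial.X^k) b) : Hsub μ →ₗ[ℝ] ℝ) := by
    apply Submodule.span_le.mpr
    rintro f ⟨j, c, hj, hc, rfl⟩
    change ⟪zf μ false (Polynomial.X^k) b, zf μ true (Polynomial.X^j) c⟫ = 0
    rw [zf, zf, toHl_inner, ← grad_curl_int hμ k j b c]
    congr 1; ext x
    simp only [Jp, if_true, JT_apply, ZT_apply]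
    simp only [Bool.false_eq_true, if_false, LinearMap.id_apply, ZT_apply, Zf, Polynomial.eval_pow, Polynomial.eval_X]
    have e : crossV (x:V) (⟪c,(x:V)⟫^j • (c - ⟪c,(x:V)⟫ • (x:V))) = ⟪c,(x:V)⟫^j • crossV x c := by
      apply V_ext <;> simp <;> ring
    rw [e, inner_smul_left, inner_smul_right, inner_sub_left, inner_smul_left, triple b, real_inner_comm (crossV (x:V) c) (x:V), cross_orth1]
    rw [real_inner_comm (crossV c b)]
    simp; ring
  exact this hu
end


abbrev MP3 := MvPolynomial (Fin 3) ℝ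

def evV (x : V) (p : MP3) : ℝ := MvPolynomial.eval (fun i => x i) p

@[fun_prop]
lemma continuous_evV (p : MP3) : Continuous (fun x : S2 => evV x p) := by
  unfold evV
  exact (MvPolynomial.continuous_eval p).comp (by fun_prop)

def gradV (p : MP3) (x : V) : V := !₂[evV x (MvPolynomial.pderiv 0 p), evV x (MvPolynomial.pderiv 1 p), evV x (MvPolynomial.pderiv 2 p)]

@[simp] lemma gradV_0 (p : MP3) (x : V) : gradV p x 0 = evV x (MvPolynomial.pderiv 0 p) := rfl
@[simp] lemma gradV_1 (p : MP3) (x : V) : gradV p x 1 = evV x (MvPolynomial.pderiv 1 p) := rfl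
@[simp] lemma gradV_2 (p : MP3) (x : V) : gradV p x 2 = evV x (MvPolynomial.pderiv 2 p) := rfl

@[fun_prop]
lemma continuous_gradV (p : MP3) : Continuous (fun x : S2 => gradV p x) := by
  unfold gradV
  refine (PiLp.continuous_toLp 2 _).comp ?_
  refine continuous_pi ?_
  intro i
  fin_cases i
  · exact continuous_evV _
  · exact continuous_evV _
  · exact continuous_evV _

lemma gradV_add (p q : MP3) (x : V) : gradV (p + q) x = gradV p x + gradV q x := by
  apply V_ext <;> simp [evV]

lemma gradV_smul (c : ℝ) (p : MP3) (x : V) : gradV (c • p) x = c • gradV p x := by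
  apply V_ext <;> simp [evV, MvPolynomial.smul_eval]

lemma gradV_mul (p q : MP3) (x : V) : gradV (p * q) x = evV x p • gradV q x + evV x q • gradV p x := by
  apply V_ext <;> simp [evV, Derivation.leibniz]

/-- tangential projection -/
def tpr (x : V) (v : V) : V := v - ⟪v, x⟫ • x

lemma tpr_add (x v w : V) : tpr x (v + w) = tpr x v + tpr x w := by
  simp only [tpr, inner_add_left]; module
lemma tpr_smul (x : V) (c : ℝ) (v : V) : tpr x (c • v) = c • tpr x v := by
  simp only [tpr, real_inner_smul_left]; module

def GamC : MP3 →ₗ[ℝ] TanC where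
  toFun p := ⟨⟨fun x => tpr x (gradV p x), by unfold tpr; fun_prop⟩, by
    intro y
    simp only [ContinuousMap.coe_mk, tpr, inner_sub_right, inner_smul_right, S2_inner, real_inner_comm (y:V)]; ring⟩
  map_add' p q := by
    ext1; ext1 x
    change tpr x (gradV (p + q) x) = tpr x (gradV p x) + tpr x (gradV q x)
    rw [gradV_add, tpr_add]
  map_smul' c p := by
    ext1; ext1 x
    change tpr x (gradV (c • p) x) = c • tpr x (gradV p x)
    rw [gradV_smul, tpr_smul]

lemma GamC_apply (p : MP3) (x : S2) : (GamC p : C(S2,V)) x = tpr x (gradV p x) := rfl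

lemma GamC_mul (p q : MP3) (x : S2) : (GamC (p * q) : C(S2,V)) x = evV x p • (GamC q : C(S2,V)) x + evV x q • (GamC p : C(S2,V)) x := by
  simp only [GamC_apply, gradV_mul, tpr_add, tpr_smul]

def ell (b : V) : MP3 := MvPolynomial.C (b 0) * MvPolynomial.X 0 + MvPolynomial.C (b 1) * MvPolynomial.X 1 + MvPolynomial.C (b 2) * MvPolynomial.X 2

lemma evV_ell (b x : V) : evV x (ell b) = ⟪b, x⟫ := by
  simp [evV, ell, V_inner]

lemma evV_mul (x : V) (p q : MP3) : evV x (p * q) = evV x p * evV x q := by simp [evV]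
lemma evV_pow (x : V) (p : MP3) (k : ℕ) : evV x (p ^ k) = evV x p ^ k := by simp [evV]

lemma gradV_ell (b x : V) : gradV (ell b) x = b := by
  apply V_ext <;> simp [evV, ell, MvPolynomial.pderiv_X, Pi.single_apply]

lemma GamC_ell (b : V) (x : S2) : (GamC (ell b) : C(S2,V)) x = tpr x b := by
  rw [GamC_apply, gradV_ell]

lemma GamC_pow (b : V) (k : ℕ) (x : S2) : (GamC (ell b ^ (k+1)) : C(S2,V)) x = (k + 1 : ℝ) • ⟪b, (x:V)⟫^k • tpr x b := by
  induction k with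
  | zero => simp [GamC_ell]
  | succ k ih =>
    rw [pow_succ, GamC_mul, ih, evV_pow, evV_ell, GamC_ell]
    push_cast
    module

lemma GamC_pow_ZT (b : V) (k : ℕ) : GamC (ell b ^ (k+1)) = (k + 1 : ℝ) • ZT (Polynomial.X^k) b := by
  ext1; ext1 x
  rw [GamC_pow]
  simp [ZT_apply, Zf, tpr]

lemma GamC_one : GamC 1 = 0 := by
  ext1; ext1 x
  rw [GamC_apply]
  have : gradV 1 (x:V) = 0 := by apply V_ext <;> simp [evV]
  rw [this]; simp [tpr]

section
variable {μ : Measure S2} [IsProbabilityMeasure μ]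

def EE (μ : Measure S2) [IsProbabilityMeasure μ] (β : Bool) : MP3 →ₗ[ℝ] Hsub μ := toHl μ ∘ₗ Jp β ∘ₗ GamC

lemma EE_pow (β : Bool) (b : V) (k : ℕ) : EE μ β (ell b ^ (k+1)) = (k + 1 : ℝ) • zf μ β (Polynomial.X^k) b := by
  simp only [EE, LinearMap.comp_apply, GamC_pow_ZT, map_smul, zf]

/-- Vandermonde -/
lemma vander {M : Type*} [AddCommGroup M] [Module ℝ M] (S : Submodule ℝ M) (k : ℕ) (v : ℕ → M)
    (h : ∀ τ : ℝ, ∑ j ∈ Finset.range k, τ^j • v j ∈ S) (j : ℕ) (hj : j < k) : v j ∈ S := by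
  by_contra hc
  obtain ⟨f, hf, hS⟩ := Submodule.exists_le_ker_of_notMem hc
  let q : Polynomial ℝ := ∑ j ∈ Finset.range k, Polynomial.monomial j (f (v j))
  have hq : q = 0 := by
    apply Polynomial.funext
    intro τ
    have := hS (h τ)
    rw [LinearMap.mem_ker, map_sum] at this
    simp only [map_smul, smul_eq_mul] at this
    simp only [q, Polynomial.eval_finset_sum, Polynomial.eval_monomial, Polynomial.eval_zero]
    rw [← this]
    exact Finset.sum_congr rfl fun i _ => mul_comm _ _
  have h2 : q.coeff j = f (v j) := by
    simp only [q, Polynomial.finset_sum_coeff, Polynomial.coeff_monomial]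
    rw [Finset.sum_ite_eq' (Finset.range k) j, if_pos (Finset.mem_range.mpr hj)]
  rw [hq, Polynomial.coeff_zero] at h2
  exact hf h2.symm

def PW (n : ℕ) : Submodule ℝ MP3 := Submodule.span ℝ {p | ∃ k b, k ≤ n ∧ ⟪b,b⟫ = (1:ℝ) ∧ p = ell b ^ k}

lemma ell_smul (c : ℝ) (b : V) : ell (c • b) = c • ell b := by
  simp [ell, MvPolynomial.smul_eq_C_mul]; ring

lemma unit_ex : ∃ b : V, ⟪b,b⟫ = (1:ℝ) := ⟨!₂[1,0,0], by rw [V_inner]; simp⟩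

lemma PW_pow (n k : ℕ) (hk : k ≤ n) (b : V) : ell b ^ k ∈ PW n := by
  by_cases hb : b = 0
  · subst hb
    have h0 : ell (0:V) = 0 := by simp [ell]
    rw [h0]
    rcases Nat.eq_zero_or_pos k with rfl | hk0
    · obtain ⟨b, hb⟩ := unit_ex
      exact Submodule.subset_span ⟨0, b, hk, hb, by simp⟩
    · rw [zero_pow (by omega)]; exact zero_mem _
  · have hn : ‖b‖ ≠ 0 := norm_ne_zero_iff.mpr hb
    have e : b = ‖b‖ • (‖b‖⁻¹ • b) := by rw [smul_smul, mul_inv_cancel₀ hn, one_smul]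
    rw [e, ell_smul, smul_pow]
    apply Submodule.smul_mem
    apply Submodule.subset_span
    refine ⟨k, _, hk, ?_, rfl⟩
    rw [inner_smul_left, inner_smul_right, real_inner_self_eq_norm_sq]
    simp; field_simp

lemma PW_split (S : Submodule ℝ MP3) (k : ℕ) (p q : MP3) (h : ∀ τ : ℝ, (p + τ • q)^k ∈ S) (j : ℕ) (hj : j ≤ k) : p^(k-j) * q^j ∈ S := by
  have h2 := vander S (k+1) (fun j => (k.choose j : ℝ) • (p^(k-j) * q^j)) (fun τ => by
    have := h τ
    rw [add_comm, add_pow] at this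
    convert this using 1
    refine Finset.sum_congr rfl fun i _ => ?_
    simp only [MvPolynomial.smul_eq_C_mul, map_pow, map_natCast, mul_pow]
    ring) j (by omega)
  have hc : (k.choose j : ℝ) ≠ 0 := by
    have := Nat.choose_pos hj
    positivity
  exact (Submodule.smul_mem_iff S hc).mp h2

lemma PW_mon (n a c e : ℕ) (h : a + c + e ≤ n) : (MvPolynomial.X 0 ^ a * MvPolynomial.X 1 ^ c * MvPolynomial.X 2 ^ e : MP3) ∈ PW n := by
  have h1 : ∀ τ : ℝ, ((MvPolynomial.X 0 : MP3) + τ • MvPolynomial.X 1)^(a+c) * MvPolynomial.X 2 ^ e ∈ PW n := by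
    intro τ
    have := PW_split (PW n) (a+c+e) (MvPolynomial.X 0 + τ • MvPolynomial.X 1) (MvPolynomial.X 2) (fun σ => by
      have := PW_pow n (a+c+e) h (!₂[1, τ, σ])
      convert this using 2
      simp [ell, MvPolynomial.smul_eq_C_mul]) e (by omega)
    simpa using this
  have := PW_split ((PW n).comap (LinearMap.mulRight ℝ (MvPolynomial.X 2 ^ e))) (a+c) (MvPolynomial.X 0) (MvPolynomial.X 1) (fun τ => by
    simpa using h1 τ) c (by omega)
  simpa using this

lemma PW_eq (n : ℕ) : PW n = MvPolynomial.restrictTotalDegree (Fin 3) ℝ n := by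
  apply le_antisymm
  · apply Submodule.span_le.mpr
    rintro p ⟨k, b, hk, hb, rfl⟩
    rw [SetLike.mem_coe, MvPolynomial.mem_restrictTotalDegree]
    refine (MvPolynomial.totalDegree_pow _ _).trans ?_
    have : (ell b).totalDegree ≤ 1 := by
      have hX : ∀ i : Fin 3, (MvPolynomial.C (b i) * MvPolynomial.X i : MP3).totalDegree ≤ 1 := by
        intro i
        refine (MvPolynomial.totalDegree_mul _ _).trans ?_
        simp
      unfold ell
      refine (MvPolynomial.totalDegree_add _ _).trans (max_le ((MvPolynomial.totalDegree_add _ _).trans (max_le (hX 0) (hX 1))) (hX 2))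
    nlinarith
  · intro p hp
    rw [MvPolynomial.mem_restrictTotalDegree] at hp
    rw [p.as_sum]
    refine Submodule.sum_mem _ fun d hd => ?_
    have h1 := (MvPolynomial.le_totalDegree hd).trans hp
    rw [Finsupp.sum_fintype _ _ (by simp), Fin.sum_univ_three] at h1
    rw [MvPolynomial.monomial_eq, Finsupp.prod_fintype _ _ (by simp), Fin.prod_univ_three, ← MvPolynomial.smul_eq_C_mul]
    exact Submodule.smul_mem _ _ (PW_mon n _ _ _ h1)

lemma EE_one (β : Bool) : EE μ β 1 = 0 := by
  simp [EE, GamC_one]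

lemma GG_eq (β : Bool) (n : ℕ) : GG μ β n = (MvPolynomial.restrictTotalDegree (Fin 3) ℝ n).map (EE μ β) := by
  rw [← PW_eq]
  apply le_antisymm
  · apply Submodule.span_le.mpr
    rintro f ⟨k, b, hk, hb, rfl⟩
    refine ⟨(k+1:ℝ)⁻¹ • ell b ^ (k+1), Submodule.smul_mem _ _ (PW_pow n _ hk b), ?_⟩
    rw [map_smul, EE_pow, smul_smul, inv_mul_cancel₀ (by positivity), one_smul]
  · rw [Submodule.map_le_iff_le_comap]
    apply Submodule.span_le.mpr
    rintro f ⟨k, b, hk, hb, rfl⟩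
    rw [SetLike.mem_coe, Submodule.mem_comap]
    cases k with
    | zero => rw [pow_zero, EE_one]; exact zero_mem _
    | succ k =>
      rw [EE_pow]
      exact Submodule.smul_mem _ _ (Submodule.subset_span ⟨k, b, hk, hb, rfl⟩)
end


lemma evV_hasDeriv (p : MP3) (γ γ' : ℝ → V) (h : ∀ t, HasDerivAt γ (γ' t) t) (t : ℝ) :
    HasDerivAt (fun s => evV (γ s) p) ⟪gradV p (γ t), γ' t⟫ t := by
  have hc : ∀ i : Fin 3, HasDerivAt (fun s => γ s i) (γ' t i) t := by
    intro i
    exact ((EuclideanSpace.proj i : V →L[ℝ] ℝ).hasFDerivAt.comp_hasDerivAt t (h t))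
  induction p using MvPolynomial.induction_on with
  | C a =>
    have : gradV (MvPolynomial.C a) (γ t) = 0 := by apply V_ext <;> simp [evV]
    rw [this, inner_zero_left]
    simpa [evV] using hasDerivAt_const t a
  | add p q hp hq =>
    rw [gradV_add, inner_add_left]
    have e : (fun s => evV (γ s) (p + q)) = (fun s => evV (γ s) p) + (fun s => evV (γ s) q) := by
      funext s; simp [evV]
    rw [e]; exact hp.add hq
  | mul_X p i hp =>
    have e : gradV (MvPolynomial.X i) (γ t) = EuclideanSpace.single i 1 := by
      fin_cases i <;> apply V_ext <;> simp [evV, MvPolynomial.pderiv_X, Pi.single_apply]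
    rw [gradV_mul, e, inner_add_left, real_inner_smul_left, real_inner_smul_left, EuclideanSpace.inner_single_left]
    have := hp.mul (hc i)
    have e2 : (fun s => evV (γ s) (p * MvPolynomial.X i)) = (fun s => evV (γ s) p) * (fun s => γ s i) := by
      funext s; simp [evV]
    rw [e2]
    refine this.congr_deriv ?_
    simp [evV]; ring

lemma evV_const (p : MP3) (hp : GamC p = 0) (x y : S2) : evV x p = evV y p := by
  obtain ⟨B, hB2, hB1⟩ := exists_frame_pair (x:V) y (S2_inner x)
  have o00 : ⟪B 0, B 0⟫ = 1 := by rw [real_inner_self_eq_norm_sq, B.orthonormal.1]; norm_num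
  have o02 : ⟪B 0, (x:V)⟫ = 0 := by rw [← hB2]; exact B.orthonormal.2 (by decide)
  have o20 : ⟪(x:V), B 0⟫ = 0 := by rw [real_inner_comm]; exact o02
  have hy : (y:V) = ⟪(x:V), (y:V)⟫ • (x:V) + ⟪B 0, (y:V)⟫ • B 0 := by
    have := B.sum_repr' (y:V)
    rw [Fin.sum_univ_three, hB1, hB2] at this
    conv_lhs => rw [← this]
    module
  set a := ⟪(x:V), (y:V)⟫ with ha
  set b := ⟪B 0, (y:V)⟫ with hb
  have hab : a^2 + b^2 = 1 := by
    have h1 := S2_inner y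
    rw [hy] at h1
    simp only [inner_add_left, inner_add_right, inner_smul_left, inner_smul_right, S2_inner, o00, o02, o20] at h1
    simp at h1
    linarith
  obtain ⟨θ, hθ1, hθ2⟩ : ∃ θ : ℝ, Real.cos θ = a ∧ Real.sin θ = b := by
    have hn : ‖(⟨a, b⟩ : ℂ)‖ = 1 := by
      rw [Complex.norm_def, Complex.normSq_mk, ← sq, ← sq, hab, Real.sqrt_one]
    refine ⟨Complex.arg ⟨a, b⟩, ?_, ?_⟩
    · have := Complex.norm_mul_cos_arg ⟨a, b⟩
      rwa [hn, one_mul] at this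
    · have := Complex.norm_mul_sin_arg ⟨a, b⟩
      rwa [hn, one_mul] at this
  let γ : ℝ → V := fun t => Real.cos t • (x:V) + Real.sin t • B 0
  let γ' : ℝ → V := fun t => (-Real.sin t) • (x:V) + Real.cos t • B 0
  have hγ : ∀ t, HasDerivAt γ (γ' t) t := fun t =>
    ((Real.hasDerivAt_cos t).smul_const (x:V)).add ((Real.hasDerivAt_sin t).smul_const (B 0))
  have hs : ∀ t, ⟪γ t, γ t⟫ = 1 := by
    intro t
    simp only [γ, inner_add_left, inner_add_right, real_inner_smul_left, inner_smul_right, S2_inner, o00, o02, o20]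
    have := Real.sin_sq_add_cos_sq t
    linear_combination this
  have ho : ∀ t, ⟪γ t, γ' t⟫ = 0 := by
    intro t
    simp only [γ, γ', inner_add_left, inner_add_right, real_inner_smul_left, inner_smul_right, S2_inner, o00, o02, o20]
    ring
  have hder : ∀ t, HasDerivAt (fun s => evV (γ s) p) 0 t := by
    intro t
    have h1 := evV_hasDeriv p γ γ' hγ t
    have hn : ‖γ t‖ = 1 := by
      have := hs t
      rw [real_inner_self_eq_norm_sq] at this
      nlinarith [norm_nonneg (γ t)]
    let z : S2 := ⟨γ t, by rw [mem_sphere_zero_iff_norm]; exact hn⟩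
    have h2 : tpr (γ t) (gradV p (γ t)) = 0 := by
      have : (GamC p : C(S2,V)) z = 0 := by rw [hp]; rfl
      exact this
    have h3 : ⟪gradV p (γ t), γ' t⟫ = 0 := by
      rw [tpr, sub_eq_zero] at h2
      rw [h2, real_inner_smul_left, ho, mul_zero]
    rwa [h3] at h1
  have hconst := is_const_of_deriv_eq_zero (f := fun s => evV (γ s) p) (fun t => (hder t).differentiableAt) (fun t => (hder t).deriv) 0 θ
  simp only [γ, Real.cos_zero, Real.sin_zero, one_smul, zero_smul, add_zero, hθ1, hθ2, ← hy] at hconst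
  exact hconst

def sN (N : ℕ) : Set (Fin 3 →₀ ℕ) := {d | d 2 ≤ 1 ∧ d 0 + d 1 + d 2 ≤ N ∧ d ≠ 0}

lemma affine_eval (N : ℕ) (p : MP3) (hp : p ∈ MvPolynomial.restrictSupport ℝ (sN N)) (u v w : ℝ) :
    MvPolynomial.eval ![u,v,w] p = MvPolynomial.eval ![u,v,0] p + w * (MvPolynomial.eval ![u,v,1] p - MvPolynomial.eval ![u,v,0] p) := by
  rw [MvPolynomial.mem_restrictSupport_iff] at hp
  simp only [MvPolynomial.eval_eq', Fin.prod_univ_three]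
  rw [← Finset.sum_sub_distrib, Finset.mul_sum, ← Finset.sum_add_distrib]
  refine Finset.sum_congr rfl fun d hd => ?_
  have h1 := (hp hd).1
  simp only [Matrix.cons_val_zero, Matrix.cons_val_one, Matrix.cons_val]
  interval_cases h : d 2 <;> simp <;> ring

lemma const_of_sphere (N : ℕ) (p : MP3) (hp : p ∈ MvPolynomial.restrictSupport ℝ (sN N)) (hG : GamC p = 0) : p = 0 := by
  obtain ⟨c, hc⟩ : ∃ c, ∀ x : S2, evV x p = c := by
    obtain ⟨b, hb⟩ := unit_ex
    have hn : ‖b‖ = 1 := by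
      rw [real_inner_self_eq_norm_sq] at hb
      nlinarith [norm_nonneg b]
    exact ⟨evV b p, fun x => evV_const p hG x ⟨b, mem_sphere_zero_iff_norm.mpr hn⟩⟩
  have hc' : ∀ u v w : ℝ, u^2 + v^2 + w^2 = 1 → MvPolynomial.eval ![u,v,w] p = c := by
    intro u v w h
    have hn : ‖(!₂[u,v,w] : V)‖ = 1 := by
      rw [EuclideanSpace.norm_eq, Fin.sum_univ_three]
      simp [h]
    rw [← hc ⟨!₂[u,v,w], mem_sphere_zero_iff_norm.mpr hn⟩]
    unfold evV
    rfl
  have hsq : ∀ u ∈ Set.Ioo (0:ℝ) (1/2), ∀ v ∈ Set.Ioo (0:ℝ) (1/2), ∀ w, MvPolynomial.eval ![u,v,w] p = c := by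
    intro u hu v hv w
    have hpos : 0 < 1 - u^2 - v^2 := by nlinarith [hu.1, hu.2, hv.1, hv.2]
    set s := Real.sqrt (1 - u^2 - v^2) with hs
    have hs2 : s^2 = 1 - u^2 - v^2 := Real.sq_sqrt hpos.le
    have hs0 : 0 < s := Real.sqrt_pos.mpr hpos
    have h1 := hc' u v s (by rw [hs2]; ring)
    have h2 := hc' u v (-s) (by rw [neg_sq, hs2]; ring)
    rw [affine_eval N p hp] at h1 h2 ⊢
    have h3 : MvPolynomial.eval ![u,v,1] p - MvPolynomial.eval ![u,v,0] p = 0 := by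
      have : s * (MvPolynomial.eval ![u,v,1] p - MvPolynomial.eval ![u,v,0] p) = 0 := by linarith
      rcases mul_eq_zero.mp this with h | h
      · linarith
      · exact h
    rw [h3] at h1 ⊢; linarith
  have hC : p = MvPolynomial.C c := by
    apply MvPolynomial.funext_set (fun _ => Set.Ioo (0:ℝ) (1/2)) (fun _ => Set.Ioo_infinite (by norm_num))
    intro x hx
    have e : x = ![x 0, x 1, x 2] := by ext i; fin_cases i <;> rfl
    rw [MvPolynomial.eval_C, e]
    exact hsq _ (hx 0 trivial) _ (hx 1 trivial) _
  rw [MvPolynomial.mem_restrictSupport_iff] at hp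
  by_cases h0 : c = 0
  · rw [hC, h0, map_zero]
  · exfalso
    have : (0 : Fin 3 →₀ ℕ) ∈ (p.support : Set _) := by
      rw [hC]; simp [h0]
    exact (hp this).2.2 rfl

section
variable {μ : Measure S2} [IsProbabilityMeasure μ]

lemma JT_JT (F : TanC) : JT (JT F) = (-1:ℝ) • F := by
  ext1; ext1 x
  have hx : ⟪(x:V), (F : C(S2,V)) x⟫ = 0 := F.2 x
  have hs := S2_sum x
  rw [JT_apply, JT_apply]
  change _ = (-1:ℝ) • (F : C(S2,V)) x
  rw [V_inner] at hx
  generalize (F : C(S2,V)) x = v at *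
  apply V_ext <;> simp
  · linear_combination (x:V) 0 * hx - v 0 * hs
  · linear_combination (x:V) 1 * hx - v 1 * hs
  · linear_combination (x:V) 2 * hx - v 2 * hs

lemma Jp_inj (β : Bool) (F : TanC) (h : Jp β F = 0) : F = 0 := by
  cases β
  · exact h
  · have h' : JT F = 0 := h
    have := JT_JT F
    rw [h', map_zero] at this
    rcases smul_eq_zero.mp this.symm with h | h
    · norm_num at h
    · exact h

lemma EE_inj (hμ : InvM μ) (β : Bool) (N : ℕ) (p : MP3) (hp : p ∈ MvPolynomial.restrictSupport ℝ (sN N)) (h : EE μ β p = 0) : p = 0 := by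
  apply const_of_sphere N p hp
  apply Jp_inj β
  apply toHl_inj hμ
  rw [map_zero]; exact h

lemma GamC_r2 (q : MP3) : GamC ((MvPolynomial.X 0 ^ 2 + MvPolynomial.X 1 ^ 2 + MvPolynomial.X 2 ^ 2) * q) = GamC q := by
  ext1; ext1 x
  rw [GamC_mul]
  have h1 : evV x (MvPolynomial.X 0 ^ 2 + MvPolynomial.X 1 ^ 2 + MvPolynomial.X 2 ^ 2) = 1 := by
    simp [evV]; exact S2_sum x
  have h2 : gradV (MvPolynomial.X 0 ^ 2 + MvPolynomial.X 1 ^ 2 + MvPolynomial.X 2 ^ 2) (x:V) = (2:ℝ) • (x:V) := by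
    apply V_ext <;> simp [evV, MvPolynomial.pderiv_X, Pi.single_apply]
  rw [h1, GamC_apply (MvPolynomial.X 0 ^ 2 + MvPolynomial.X 1 ^ 2 + MvPolynomial.X 2 ^ 2), h2, tpr_smul, tpr, S2_inner]
  simp

lemma EE_r2 (β : Bool) (q : MP3) : EE μ β (q * MvPolynomial.X 2 ^ 2) = EE μ β q - EE μ β (q * MvPolynomial.X 0 ^ 2) - EE μ β (q * MvPolynomial.X 1 ^ 2) := by
  have : EE μ β ((MvPolynomial.X 0 ^ 2 + MvPolynomial.X 1 ^ 2 + MvPolynomial.X 2 ^ 2) * q) = EE μ β q := by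
    simp only [EE, LinearMap.comp_apply, GamC_r2]
  rw [← this, ← map_sub, ← map_sub]
  congr 1; ring

lemma EE_mon_mem (β : Bool) (N : ℕ) (e a c : ℕ) (h : a + c + e ≤ N) :
    EE μ β (MvPolynomial.X 0 ^ a * MvPolynomial.X 1 ^ c * MvPolynomial.X 2 ^ e) ∈ (MvPolynomial.restrictSupport ℝ (sN N)).map (EE μ β) := by
  induction e using Nat.strong_induction_on generalizing a c with
  | _ e ih =>
  by_cases he : e ≤ 1
  · by_cases h0 : a + c + e = 0
    · obtain rfl : a = 0 := by omega
      obtain rfl : c = 0 := by omega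
      obtain rfl : e = 0 := by omega
      simp only [pow_zero, mul_one]
      rw [EE_one]; exact zero_mem _
    · refine ⟨_, ?_, rfl⟩
      have : (MvPolynomial.X 0 ^ a * MvPolynomial.X 1 ^ c * MvPolynomial.X 2 ^ e : MP3) = MvPolynomial.monomial (Finsupp.equivFunOnFinite.symm ![a,c,e]) 1 := by
        rw [MvPolynomial.monomial_eq, Finsupp.prod_fintype _ _ (by simp), Fin.prod_univ_three]
        simp
      rw [this]
      rw [SetLike.mem_coe, MvPolynomial.monomial_mem_restrictSupport]
      left
      refine ⟨by simpa using he, by simpa using h, ?_⟩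
      intro hz
      have h1 := DFunLike.congr_fun hz 0
      have h2 := DFunLike.congr_fun hz 1
      have h3 := DFunLike.congr_fun hz 2
      simp at h1 h2 h3
      omega
  · obtain ⟨e, rfl⟩ : ∃ e', e = e' + 2 := ⟨e - 2, by omega⟩
    rw [pow_add, ← mul_assoc, EE_r2]
    have i1 := ih e (by omega) a c (by omega)
    have i2 := ih e (by omega) (a+2) c (by omega)
    have i3 := ih e (by omega) a (c+2) (by omega)
    refine sub_mem (sub_mem i1 ?_) ?_
    · convert i2 using 2; ring
    · convert i3 using 2; ring

lemma GG_eq2 (β : Bool) (N : ℕ) : GG μ β N = (MvPolynomial.restrictSupport ℝ (sN N)).map (EE μ β) := by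
  rw [GG_eq]
  apply le_antisymm
  · rw [Submodule.map_le_iff_le_comap]
    intro p hp
    rw [MvPolynomial.mem_restrictTotalDegree] at hp
    rw [p.as_sum]
    refine Submodule.sum_mem _ fun d hd => ?_
    have h1 := (MvPolynomial.le_totalDegree hd).trans hp
    rw [Finsupp.sum_fintype _ _ (by simp), Fin.sum_univ_three] at h1
    rw [MvPolynomial.monomial_eq, Finsupp.prod_fintype _ _ (by simp), Fin.prod_univ_three, ← MvPolynomial.smul_eq_C_mul]
    exact Submodule.smul_mem _ _ (EE_mon_mem β N _ _ _ h1)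
  · apply Submodule.map_mono
    apply MvPolynomial.restrictSupport_mono
    intro d hd
    rw [Set.mem_setOf_eq, Finsupp.sum_fintype _ _ (by simp), Fin.sum_univ_three]
    exact hd.2.1

end

def phiN (N : ℕ) (q : ℕ × ℕ) : Fin 3 →₀ ℕ := Finsupp.equivFunOnFinite.symm
  (if q.1 + q.2 ≤ N then ![q.1, q.2, 0] else ![N - q.1, N - q.2, 1])

lemma sN_image (N : ℕ) : sN N = (phiN N) '' ((Finset.range (N+1) ×ˢ Finset.range (N+1)).erase (0,0) : Finset (ℕ × ℕ)) := by
  ext d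
  simp only [Set.mem_image, Finset.mem_coe, Finset.mem_erase, Finset.mem_product, Finset.mem_range]
  constructor
  · rintro ⟨h1, h2, h3⟩
    by_cases h : d 2 = 0
    · refine ⟨(d 0, d 1), ⟨?_, by dsimp; omega, by dsimp; omega⟩, ?_⟩
      · intro hz
        rw [Prod.mk.injEq] at hz
        apply h3
        ext i; fin_cases i
        · exact hz.1
        · exact hz.2
        · exact h
      · unfold phiN
        rw [if_pos (by dsimp; omega)]
        ext i; fin_cases i <;> simp [h]
    · refine ⟨(N - d 0, N - d 1), ⟨?_, by dsimp; omega, by dsimp; omega⟩, ?_⟩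
      · intro hz
        rw [Prod.mk.injEq] at hz
        omega
      · unfold phiN
        rw [if_neg (by dsimp; omega)]
        ext i; fin_cases i <;> simp <;> omega
  · rintro ⟨⟨i, j⟩, ⟨h0, h1, h2⟩, rfl⟩
    dsimp at h1 h2
    unfold phiN sN
    split_ifs with h
    · refine ⟨by simp, by simpa using h, ?_⟩
      intro hz
      have e1 := DFunLike.congr_fun hz 0
      have e2 := DFunLike.congr_fun hz 1
      simp at e1 e2
      exact h0 (by rw [e1, e2])
    · dsimp at h
      refine ⟨by simp, by simp; omega, ?_⟩
      intro hz
      have e1 := DFunLike.congr_fun hz 2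
      simp at e1

lemma sN_ncard (N : ℕ) : (sN N).ncard = (N+1)*(N+1) - 1 := by
  rw [sN_image, Set.ncard_image_of_injOn, Set.ncard_coe_finset, Finset.card_erase_of_mem (by simp), Finset.card_product, Finset.card_range]
  rintro ⟨i, j⟩ h ⟨k, l⟩ h' heq
  simp only [Finset.mem_coe, Finset.mem_erase, Finset.mem_product, Finset.mem_range] at h h'
  have e0 := DFunLike.congr_fun heq 0
  have e1 := DFunLike.congr_fun heq 1
  have e2 := DFunLike.congr_fun heq 2
  unfold phiN at e0 e1 e2
  dsimp at e0 e1 e2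
  split_ifs at e0 e1 e2 <;> simp at e0 e1 e2
  · rw [e0, e1]
  · rw [Prod.mk.injEq]; omega

lemma sN_finite (N : ℕ) : (sN N).Finite := by
  rw [sN_image]; exact (Finset.finite_toSet _).image _

section
variable {μ : Measure S2} [IsProbabilityMeasure μ]

instance rs_fd (N : ℕ) : FiniteDimensional ℝ (MvPolynomial.restrictSupport ℝ (sN N)) := by
  haveI : Finite (sN N) := sN_finite N
  exact Module.Finite.of_basis (MvPolynomial.basisRestrictSupport ℝ (sN N))

instance GG_fd (β : Bool) (N : ℕ) : FiniteDimensional ℝ (GG μ β N) := by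
  rw [GG_eq2]; infer_instance

lemma GG_finrank (hμ : InvM μ) (β : Bool) (N : ℕ) : Module.finrank ℝ (GG μ β N) + 1 = (N+1)*(N+1) := by
  have h1 : Module.finrank ℝ (GG μ β N) = Module.finrank ℝ (MvPolynomial.restrictSupport ℝ (sN N)) := by
    rw [GG_eq2]
    have hinj : Function.Injective ((EE μ β).domRestrict (MvPolynomial.restrictSupport ℝ (sN N))) := by
      rw [injective_iff_map_eq_zero]
      intro p hp
      exact Subtype.ext (EE_inj hμ β N p.1 p.2 hp)
    have := LinearMap.finrank_range_of_inj hinj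
    rw [LinearMap.range_domRestrict] at this
    exact this
  rw [h1, Module.finrank_eq_nat_card_basis (MvPolynomial.basisRestrictSupport ℝ (sN N))]
  have := sN_ncard N
  rw [← Nat.card_coe_set_eq] at this
  rw [this]
  have : 1 ≤ (N+1)*(N+1) := Nat.mul_pos (by omega) (by omega)
  omega

lemma UU_finrank (hμ : InvM μ) (β : Bool) (m : ℕ) : Module.finrank ℝ (UU μ β m) = 2 * (m + 1) + 1 := by
  have h1 := Submodule.finrank_add_inf_finrank_orthogonal (GG_mono (μ := μ) β (Nat.le_succ m))
  have h2 := GG_finrank hμ β m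
  have h3 := GG_finrank hμ β (m+1)
  have : (GG μ β m)ᗮ ⊓ GG μ β m.succ = UU μ β m := by rw [UU, inf_comm]
  rw [this] at h1
  have e : Module.finrank ℝ (GG μ β m.succ) = Module.finrank ℝ (GG μ β (m+1)) := rfl
  nlinarith

end


section
variable {μ : Measure S2} [IsProbabilityMeasure μ]

instance Hsub_complete : CompleteSpace (Hsub μ) := by
  have hcl : IsClosed (Hsub μ : Set (Lp V 2 μ)) := by
    apply IsSeqClosed.isClosed
    intro f g hf hfg
    have h1 := tendstoInMeasure_of_tendsto_Lp hfg
    obtain ⟨ns, _, hns⟩ := h1.exists_seq_tendsto_ae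
    have h2 : ∀ᵐ x ∂μ, ∀ n, (f n : S2 → V) x ∈ plane x := ae_all_iff.mpr (fun n => hf n)
    change ∀ᵐ x ∂μ, g x ∈ plane x
    filter_upwards [hns, h2] with x hx1 hx2
    rw [mem_plane]
    have h3 : Filter.Tendsto (fun i => ⟪(x:V), (f (ns i) : S2 → V) x⟫) Filter.atTop (nhds ⟪(x:V), g x⟫) :=
      tendsto_const_nhds.inner hx1
    have h4 : (fun i => ⟪(x:V), (f (ns i) : S2 → V) x⟫) = fun _ => (0:ℝ) := by
      funext i; exact mem_plane.mp (hx2 (ns i))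
    rw [h4] at h3
    exact tendsto_nhds_unique h3 tendsto_const_nhds
  exact hcl.completeSpace_coe

def WW (μ : Measure S2) [IsProbabilityMeasure μ] : Submodule ℝ (Hsub μ) := ⨆ i : ℕ × Bool, UU μ i.2 i.1

lemma GG_le (β : Bool) (n : ℕ) : GG μ β n ≤ WW μ := by
  induction n with
  | zero =>
    have : GG μ β 0 = ⊥ := by
      rw [GG, Submodule.span_eq_bot]; rintro f ⟨k, b, hk, _⟩; omega
    rw [this]; exact bot_le
  | succ n ih =>
    have h1 := Submodule.sup_orthogonal_inf_of_hasOrthogonalProjection (GG_mono (μ := μ) β (Nat.le_succ n))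
    have h2 : (GG μ β n)ᗮ ⊓ GG μ β n.succ = UU μ β n := by rw [UU, inf_comm]
    rw [h2] at h1
    change GG μ β n.succ ≤ _
    rw [← h1]
    exact sup_le ih (le_iSup (fun i : ℕ × Bool => UU μ i.2 i.1) (n, β))

lemma EE_mem (β : Bool) (p : MP3) : EE μ β p ∈ WW μ := by
  apply GG_le β p.totalDegree
  rw [GG_eq]
  exact ⟨p, (MvPolynomial.mem_restrictTotalDegree _ _ _).mpr le_rfl, rfl⟩

def KT (b : V) (m : ℕ) (a : V) : TanC := ⟨⟨fun x => ⟪b,(x:V)⟫^m • tpr x a, by unfold tpr; fun_prop⟩, by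
    intro y
    simp only [ContinuousMap.coe_mk, tpr, inner_sub_right, inner_smul_right, S2_inner, real_inner_comm (y:V)]; ring⟩

lemma KT_apply (b : V) (m : ℕ) (a : V) (x : S2) : (KT b m a : C(S2,V)) x = ⟪b,(x:V)⟫^m • tpr x a := rfl

lemma KT_zero (b a : V) : KT b 0 a = GamC (ell a) := by
  ext1; ext1 x
  rw [KT_apply, GamC_ell, pow_zero, one_smul]

lemma cross_tpr (x a b : V) : crossV x (tpr x (crossV a b)) = ⟪b, x⟫ • tpr x a - ⟪a, x⟫ • tpr x b := by
  apply V_ext <;> simp [tpr, V_inner] <;> ring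

lemma KT_succ (b a : V) (k : ℕ) : ((k:ℝ) + 2) • KT b (k+1) a = GamC (ell b ^ (k+1) * ell a) + ((k:ℝ) + 1) • JT (KT b k (crossV a b)) := by
  ext1; ext1 x
  change ((k:ℝ) + 2) • (KT b (k+1) a : C(S2,V)) x = (GamC (ell b ^ (k+1) * ell a) : C(S2,V)) x + ((k:ℝ)+1) • (JT (KT b k (crossV a b)) : C(S2,V)) x
  rw [GamC_mul, GamC_pow, GamC_ell, evV_pow, evV_ell, evV_ell, JT_apply, KT_apply, KT_apply]
  have : crossV (x:V) (⟪b,(x:V)⟫^k • tpr x (crossV a b)) = ⟪b,(x:V)⟫^k • crossV (x:V) (tpr x (crossV a b)) := by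
    rw [← crossL_apply, map_smul, crossL_apply]
  rw [this, cross_tpr, pow_succ]
  module

lemma KT_mem (b : V) (m : ℕ) (a : V) : toHl μ (KT b m a) ∈ WW μ ∧ toHl μ (JT (KT b m a)) ∈ WW μ := by
  induction m generalizing a with
  | zero =>
    rw [KT_zero]
    exact ⟨EE_mem false (ell a), EE_mem true (ell a)⟩
  | succ k ih =>
    have h := KT_succ b a k
    have hk : (k:ℝ) + 2 ≠ 0 := by positivity
    have i := ih (crossV a b)
    constructor
    · rw [← Submodule.smul_mem_iff _ hk, ← map_smul, h, map_add, map_smul]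
      exact add_mem (EE_mem false _) (smul_mem _ _ i.2)
    · rw [← Submodule.smul_mem_iff _ hk, ← map_smul, ← map_smul, h, map_add, map_smul, JT_JT, map_add, map_smul, map_smul]
      exact add_mem (EE_mem true _) (smul_mem _ _ (smul_mem _ _ i.1))

def coordC (i : Fin 3) : C(S2, ℝ) := ⟨fun x => (x:V) i, by fun_prop⟩

def polyC : MP3 →ₐ[ℝ] C(S2, ℝ) := MvPolynomial.aeval coordC

lemma polyC_ell (b : V) (x : S2) : polyC (ell b) x = ⟪b, (x:V)⟫ := by
  simp [polyC, ell, V_inner, coordC]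

lemma polyC_dense : (polyC.range).topologicalClosure = ⊤ := by
  apply ContinuousMap.subalgebra_topologicalClosure_eq_top_of_separatesPoints
  intro x y hxy
  by_contra hc
  push Not at hc
  apply hxy
  ext1
  have : ∀ i, (x:V) i = (y:V) i := by
    intro i
    have := hc (coordC i) ⟨coordC i, ⟨MvPolynomial.X i, by simp [polyC]⟩, rfl⟩
    exact this
  exact V_ext (this 0) (this 1) (this 2)

def smC (a : V) : C(S2,ℝ) →L[ℝ] C(S2,V) := ContinuousLinearMap.compLeftContinuous ℝ S2 (ContinuousLinearMap.toSpanSingleton ℝ a)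

lemma smC_apply (a : V) (f : C(S2,ℝ)) (x : S2) : smC a f x = f x • a := rfl

def LamC (g : Lp V 2 μ) (a : V) : C(S2,ℝ) →L[ℝ] ℝ := (innerSL ℝ g).comp ((ContinuousMap.toLp (E := V) 2 μ ℝ).comp (smC a))

lemma LamC_pow (g : Hsub μ) (hg : g ∈ (WW μ)ᗮ) (a b : V) (m : ℕ) : LamC (g : Lp V 2 μ) a (polyC (ell b ^ m)) = 0 := by
  have h1 : ⟪g, toHl μ (KT b m a)⟫ = 0 := by
    rw [real_inner_comm]; exact hg _ (KT_mem b m a).1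
  rw [← h1, Hl_inner]
  change ⟪(g : Lp V 2 μ), ContinuousMap.toLp (E := V) 2 μ ℝ (smC a (polyC (ell b ^ m)))⟫ = _
  rw [MeasureTheory.L2.inner_def]
  apply integral_congr_ae
  have hgm : ∀ᵐ x ∂μ, ((g : Lp V 2 μ) : S2 → V) x ∈ plane x := g.2
  filter_upwards [ContinuousMap.coeFn_toLp (p := 2) (𝕜 := ℝ) μ (smC a (polyC (ell b ^ m))), toHl_coe (μ := μ) (KT b m a), hgm] with x e1 e2 e3
  rw [mem_plane] at e3
  rw [e1, e2, smC_apply, KT_apply, map_pow, ContinuousMap.pow_apply, polyC_ell, tpr, inner_smul_right, inner_smul_right, inner_sub_right, inner_smul_right, real_inner_comm (x:V) (((g : Lp V 2 μ) : S2 → V) x), e3]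
  ring

lemma LamC_zero (g : Hsub μ) (hg : g ∈ (WW μ)ᗮ) (a : V) (f : C(S2,ℝ)) : LamC (g : Lp V 2 μ) a f = 0 := by
  have h1 : ∀ p : MP3, LamC (g : Lp V 2 μ) a (polyC p) = 0 := by
    intro p
    have hp : p ∈ PW p.totalDegree := by
      rw [PW_eq]; exact (MvPolynomial.mem_restrictTotalDegree _ _ _).mpr le_rfl
    have hle : PW p.totalDegree ≤ LinearMap.ker ((LamC (g : Lp V 2 μ) a : C(S2,ℝ) →ₗ[ℝ] ℝ) ∘ₗ polyC.toLinearMap) := by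
      apply Submodule.span_le.mpr
      rintro q ⟨k, b, hk, hb, rfl⟩
      exact LamC_pow g hg a b k
    exact hle hp
  have hcl : IsClosed {f : C(S2,ℝ) | LamC (g : Lp V 2 μ) a f = 0} := isClosed_eq (LamC (g : Lp V 2 μ) a).continuous continuous_const
  have hsub : (polyC.range : Set C(S2,ℝ)) ⊆ {f : C(S2,ℝ) | LamC (g : Lp V 2 μ) a f = 0} := by
    rintro _ ⟨p, rfl⟩; exact h1 p
  have h3 := closure_minimal hsub hcl
  rw [← Subalgebra.topologicalClosure_coe, polyC_dense] at h3
  exact h3 (Algebra.mem_top : f ∈ ⊤)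

lemma WW_dense : (WW μ)ᗮ = ⊥ := by
  rw [eq_bot_iff]
  intro g hg
  rw [Submodule.mem_bot]
  have h1 : ∀ F : C(S2,V), ⟪(g : Lp V 2 μ), ContinuousMap.toLp (E := V) 2 μ ℝ F⟫ = 0 := by
    intro F
    have e : F = ∑ i : Fin 3, smC (EuclideanSpace.single i 1) ⟨fun x => F x i, by fun_prop⟩ := by
      ext1 x
      rw [ContinuousMap.sum_apply, Fin.sum_univ_three]
      simp only [smC_apply, ContinuousMap.coe_mk]
      apply V_ext <;> simp
    rw [e, map_sum, inner_sum]
    exact Finset.sum_eq_zero fun i _ => LamC_zero g hg _ _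
  have hd : DenseRange (ContinuousMap.toLp (E := V) 2 μ ℝ) := ContinuousMap.toLp_denseRange V μ ℝ (by norm_num)
  have h2 : ⟪(g : Lp V 2 μ), (g : Lp V 2 μ)⟫ = 0 := by
    refine hd.induction_on (p := fun v => ⟪(g : Lp V 2 μ), v⟫ = 0) (g : Lp V 2 μ) ?_ h1
    exact isClosed_eq (by fun_prop) continuous_const
  exact Subtype.ext (inner_self_eq_zero.mp h2)

instance UU_fd (β : Bool) (m : ℕ) : FiniteDimensional ℝ (UU μ β m) :=
  Submodule.finiteDimensional_of_le (inf_le_left : UU μ β m ≤ GG μ β (m+1))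

lemma UU_orth (hμ : InvM μ) : OrthogonalFamily ℝ (fun i : ℕ × Bool => UU μ i.2 i.1) (fun i => (UU μ i.2 i.1).subtypeₗᵢ) := by
  rw [OrthogonalFamily]
  have key : ∀ (β : Bool) (m n : ℕ), m < n → ∀ u ∈ UU μ β m, ∀ v ∈ UU μ β n, ⟪u, v⟫ = 0 := by
    intro β m n hmn u hu v hv
    exact hv.2 u (GG_mono β hmn hu.1)
  have gc : ∀ (m n : ℕ), ∀ u ∈ UU μ false m, ∀ v ∈ UU μ true n, ⟪u, v⟫ = 0 := by
    intro m n u hu v hv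
    rw [real_inner_comm]
    exact grad_curl hμ (m+1) (n+1) hu.1 v hv.1
  rintro ⟨m, β⟩ ⟨n, β'⟩ hne ⟨u, hu⟩ ⟨v, hv⟩
  change ⟪u, v⟫ = 0
  dsimp only at hu hv
  cases β <;> cases β'
  · rcases lt_trichotomy m n with h | h | h
    · exact key _ _ _ h u hu v hv
    · exact absurd (by rw [h]) hne
    · rw [real_inner_comm]; exact key _ _ _ h v hv u hu
  · exact gc _ _ u hu v hv
  · rw [real_inner_comm]; exact gc _ _ v hv u hu
  · rcases lt_trichotomy m n with h | h | h
    · exact key _ _ _ h u hu v hv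
    · exact absurd (by rw [h]) hne
    · rw [real_inner_comm]; exact key _ _ _ h v hv u hu
end


def lamV (m : ℕ) : ℝ := (-1)^m / ((m+1) * (m+2))

lemma lamV_abs (m : ℕ) : |lamV m| = 1 / (((m:ℝ)+1) * (m+2)) := by
  unfold lamV
  rw [abs_div, abs_pow, abs_neg, abs_one, one_pow, abs_of_pos (by positivity)]

lemma lamV_inj {m k : ℕ} (h : |lamV m| = |lamV k|) : m = k := by
  rw [lamV_abs, lamV_abs, div_eq_div_iff (by positivity) (by positivity)] at h
  have h2 : (m+1)*(m+2) = (k+1)*(k+2) := by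
    have : (((m+1)*(m+2) : ℕ) : ℝ) = (((k+1)*(k+2) : ℕ) : ℝ) := by push_cast; linarith
    exact_mod_cast this
  rcases lt_trichotomy m k with h3 | h3 | h3
  · nlinarith
  · exact h3
  · nlinarith

lemma lamV_ne (m : ℕ) : lamV m ≠ 0 := by
  rw [← abs_pos, lamV_abs]; positivity

lemma lamV_le (m : ℕ) : |lamV m| ≤ 1 / ((m:ℝ)+1) := by
  rw [lamV_abs]
  apply one_div_le_one_div_of_le (by positivity)
  have : (0:ℝ) ≤ m := Nat.cast_nonneg m
  nlinarith

lemma tend_cof (α : ℕ × Bool → ℝ) (h : ∀ i, |α i| ≤ 1 / ((i.1:ℝ)+1)) :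
    Filter.Tendsto α Filter.cofinite (nhds 0) := by
  rw [Metric.tendsto_nhds]
  intro ε hε
  obtain ⟨N, hN⟩ := exists_nat_one_div_lt hε
  rw [Filter.eventually_cofinite]
  apply Set.Finite.subset ((Finset.range N ×ˢ (Finset.univ : Finset Bool)).finite_toSet)
  intro i hi
  simp only [Set.mem_setOf_eq, Real.dist_eq, sub_zero, not_lt] at hi
  simp only [Finset.coe_product, Set.mem_prod, Finset.coe_range, Set.mem_Iio, Finset.coe_univ, Set.mem_univ, and_true]
  by_contra hc
  push Not at hc
  have h1 : 1 / ((i.1:ℝ)+1) ≤ 1 / ((N:ℝ)+1) := by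
    apply one_div_le_one_div_of_le (by positivity)
    have : (N:ℝ) ≤ i.1 := by exact_mod_cast hc
    linarith
  linarith [h i]

lemma alO_eq (β : Bool) (m : ℕ) : (1/2) * (sgB β * (-1)^m - 1) * ((-1)^m / (((m:ℝ)+1) * (m+2)))
    = if β = decide (Even m) then - lamV m else 0 := by
  unfold sgB lamV
  rcases Nat.even_or_odd m with h | h
  · cases β <;> simp [h, h.neg_one_pow] <;> ring
  · have h' : ¬ Even m := Nat.not_even_iff_odd.mpr h
    cases β <;> simp [h', h.neg_one_pow] <;> ring

theorem spec_aux
    (μ : Measure S2) [IsProbabilityMeasure μ]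
    (hμ : ∀ g : V ≃ₗᵢ[ℝ] V, MeasurePreserving (sphereMap g) μ μ)
    (A : Hsub μ →L[ℝ] Hsub μ) (α : ℕ × Bool → ℝ) (hA : ∀ i : ℕ × Bool, ∀ u ∈ UU μ i.2 i.1, A u = α i • u)
    (ν : ℝ) (s : Finset (ℕ × Bool)) (hs : ∀ i, α i = ν ↔ i ∈ s) :
    Module.End.eigenspace (A : Hsub μ →ₗ[ℝ] Hsub μ) ν = ⨆ i ∈ s, UU μ i.2 i.1 :=
  abs_eig (UU_orth hμ) (WW_dense (μ := μ)) hA ν s hs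

lemma hasEig_iff {E : Type*} [AddCommGroup E] [Module ℝ E] (A : E →ₗ[ℝ] E) (ν : ℝ) :
    Module.End.HasEigenvalue A ν ↔ Module.End.eigenspace A ν ≠ ⊥ := Iff.rfl

lemma hasEig_of_finrank {E : Type*} [AddCommGroup E] [Module ℝ E] (A : E →ₗ[ℝ] E) (ν : ℝ) (k : ℕ)
    (h : Module.finrank ℝ (Module.End.eigenspace A ν) = k + 1) :
    Module.End.HasEigenvalue A ν := by
  rw [hasEig_iff]
  intro h0
  rw [h0, finrank_bot] at h
  omega

/-- The parallel translation operator `T = C - O` is a compact self-adjoint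
operator with trivial kernel whose eigenvalues are exactly `λ_n = (-1)^(n-1)/(n(n+1))`,
`n ≥ 1`, the eigenspace for `λ_n` having dimension `2(2n+1)`; the orthographic operator `O`
is a compact self-adjoint operator whose nonzero eigenvalues are exactly
`-λ_n = (-1)^n/(n(n+1))`, `n ≥ 1`, the eigenspace for `-λ_n` having dimension `2n+1`. -/
theorem parallel_translation_and_orthographic_spectrum
    (μ : Measure S2) [IsProbabilityMeasure μ]
    (hμ : ∀ g : V ≃ₗᵢ[ℝ] V, MeasurePreserving (sphereMap g) μ μ)
    (Top Oop : Hsub μ →L[ℝ] Hsub μ)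
    (hT : ∀ s : Hsub μ, ∀ᵐ x ∂μ,
      ((Top s : Lp V 2 μ) : S2 → V) x = ∫ y, Tker x y (((s : Lp V 2 μ) : S2 → V) y) ∂μ)
    (hO : ∀ s : Hsub μ, ∀ᵐ x ∂μ,
      ((Oop s : Lp V 2 μ) : S2 → V) x = ∫ y, Oker x y (((s : Lp V 2 μ) : S2 → V) y) ∂μ) :
    -- `T` is compact and self-adjoint, with trivial kernel
    IsCompactOperator Top ∧
    (∀ f g : Hsub μ, ⟪Top f, g⟫ = ⟪f, Top g⟫) ∧
    LinearMap.ker (Top : Hsub μ →ₗ[ℝ] Hsub μ) = ⊥ ∧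
    -- the eigenvalues of `T` are exactly the `λ_n`
    (∀ lam : ℝ,
      Module.End.HasEigenvalue (Top : Hsub μ →ₗ[ℝ] Hsub μ) lam ↔
        ∃ n : ℕ, 1 ≤ n ∧ lam = (-1 : ℝ) ^ (n - 1) / (n * (n + 1))) ∧
    (∀ n : ℕ, 1 ≤ n →
      Module.finrank ℝ
        (Module.End.eigenspace (Top : Hsub μ →ₗ[ℝ] Hsub μ)
          ((-1 : ℝ) ^ (n - 1) / (n * (n + 1)))) = 2 * (2 * n + 1)) ∧
    -- `O` is compact and self-adjoint
    IsCompactOperator Oop ∧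
    (∀ f g : Hsub μ, ⟪Oop f, g⟫ = ⟪f, Oop g⟫) ∧
    -- the nonzero eigenvalues of `O` are exactly the `-λ_n`
    (∀ lam : ℝ, lam ≠ 0 →
      (Module.End.HasEigenvalue (Oop : Hsub μ →ₗ[ℝ] Hsub μ) lam ↔
        ∃ n : ℕ, 1 ≤ n ∧ lam = (-1 : ℝ) ^ n / (n * (n + 1)))) ∧
    (∀ n : ℕ, 1 ≤ n →
      Module.finrank ℝ
        (Module.End.eigenspace (Oop : Hsub μ →ₗ[ℝ] Hsub μ)
          ((-1 : ℝ) ^ n / (n * (n + 1)))) = 2 * n + 1) := by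
  have hU := UU_orth (μ := μ) hμ
  have hd : (⨆ i : ℕ × Bool, UU μ i.2 i.1)ᗮ = ⊥ := WW_dense (μ := μ)
  have hAT : ∀ i : ℕ × Bool, ∀ u ∈ UU μ i.2 i.1, Top u = lamV i.1 • u := fun i u hu =>
    UU_eig (Act_T hμ Top hT) i.2 i.1 u hu
  have hAO : ∀ i : ℕ × Bool, ∀ u ∈ UU μ i.2 i.1,
      Oop u = (if i.2 = decide (Even i.1) then - lamV i.1 else 0) • u := fun i u hu => by
    rw [← alO_eq]
    exact UU_eig (Act_O hμ Oop hO) i.2 i.1 u hu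
  have hT1 : ∀ n : ℕ, 1 ≤ n → (-1 : ℝ) ^ (n - 1) / (n * (n + 1)) = lamV (n-1) := by
    intro n hn
    obtain ⟨m, rfl⟩ := Nat.exists_eq_add_of_le' hn
    simp only [Nat.add_sub_cancel, lamV]
    push_cast
    ring_nf
  have hO1 : ∀ n : ℕ, 1 ≤ n → (-1 : ℝ) ^ n / (n * (n + 1)) = - lamV (n-1) := by
    intro n hn
    obtain ⟨m, rfl⟩ := Nat.exists_eq_add_of_le' hn
    simp only [Nat.add_sub_cancel, lamV]
    push_cast
    ring_nf
  have fT : ∀ n : ℕ, 1 ≤ n →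
      Module.finrank ℝ
        (Module.End.eigenspace (Top : Hsub μ →ₗ[ℝ] Hsub μ)
          ((-1 : ℝ) ^ (n - 1) / (n * (n + 1)))) = 2 * (2 * n + 1) := by
    intro n hn
    rw [hT1 n hn, spec_aux μ hμ Top (fun i => lamV i.1) hAT (lamV (n-1)) {(n-1,false),(n-1,true)} (by
      rintro ⟨m, β⟩
      simp only [Finset.mem_insert, Finset.mem_singleton, Prod.mk.injEq]
      constructor
      · intro h
        have := lamV_inj (congrArg abs h)
        cases β <;> simp [this]
      · rintro (h | h) <;> rw [h.1])]
    rw [Finset.iSup_insert, Finset.iSup_singleton]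
    have h1 := Submodule.finrank_sup_add_finrank_inf_eq (UU μ false (n-1)) (UU μ true (n-1))
    have h2 : UU μ false (n-1) ⊓ UU μ true (n-1) = ⊥ := by
      rw [Submodule.eq_bot_iff]
      rintro x ⟨hx1, hx2⟩
      have := abs_orth hU (i := (n-1,false)) (j := (n-1,true)) (by simp) hx1 hx2
      exact inner_self_eq_zero.mp this
    rw [h2, finrank_bot, UU_finrank hμ, UU_finrank hμ] at h1
    simp only at h1 ⊢
    omega
  have fO : ∀ n : ℕ, 1 ≤ n →
      Module.finrank ℝ
        (Module.End.eigenspace (Oop : Hsub μ →ₗ[ℝ] Hsub μ)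
          ((-1 : ℝ) ^ n / (n * (n + 1)))) = 2 * n + 1 := by
    intro n hn
    rw [hO1 n hn, spec_aux μ hμ Oop _ hAO (- lamV (n-1)) {(n-1, decide (Even (n-1)))} (by
      rintro ⟨m, β⟩
      simp only [Finset.mem_singleton, Prod.mk.injEq]
      constructor
      · intro h
        split_ifs at h with hc
        · have := lamV_inj (congrArg abs (neg_injective h))
          subst this
          exact ⟨rfl, hc⟩
        · exact absurd (neg_eq_zero.mp h.symm) (lamV_ne _)
      · rintro ⟨rfl, rfl⟩
        simp)]
    rw [Finset.iSup_singleton, UU_finrank hμ]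
    simp only
    omega
  refine ⟨?_, abs_symm hU hd hAT, ?_, ?_, fT, ?_, abs_symm hU hd hAO, ?_, fO⟩
  · exact abs_compact hU hd hAT (tend_cof _ fun i => lamV_le i.1)
  · have := spec_aux μ hμ Top (fun i => lamV i.1) hAT 0 ∅ (by
      intro i; simp [lamV_ne])
    rw [Module.End.eigenspace_zero] at this
    simpa using this
  · intro lam
    constructor
    · intro h
      by_contra hc
      push Not at hc
      apply (hasEig_iff _ _).mp h
      rw [spec_aux μ hμ Top (fun i => lamV i.1) hAT lam ∅ (by
        rintro ⟨m, β⟩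
        have := hc (m+1) (by omega)
        rw [hT1 _ (by omega)] at this
        simpa using this.symm)]
      simp
    · rintro ⟨n, hn, rfl⟩
      exact hasEig_of_finrank _ _ (2 * (2 * n + 1) - 1) (by rw [fT n hn]; omega)
  · apply abs_compact hU hd hAO (tend_cof _ fun i => ?_)
    split_ifs
    · rw [abs_neg]; exact lamV_le i.1
    · rw [abs_zero]; positivity
  · intro lam hlam
    constructor
    · intro h
      by_contra hc
      push Not at hc
      apply (hasEig_iff _ _).mp h
      rw [spec_aux μ hμ Oop _ hAO lam ∅ (by
        rintro ⟨m, β⟩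
        have := hc (m+1) (by omega)
        rw [hO1 _ (by omega)] at this
        simp only [Nat.add_sub_cancel] at this
        simp only [Finset.notMem_empty, iff_false]
        split_ifs
        · exact this.symm
        · exact hlam.symm)]
      simp
    · rintro ⟨n, hn, rfl⟩
      exact hasEig_of_finrank _ _ (2 * n) (fO n hn)
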